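/- arXiv:1606.06318 — 2 statements merged into one kernel-verified Lean document; each statement's English description precedes it below -/
import Mathlib

section
/- Let ρ > 0, c > 0, x₀ ≥ 0, and let F : ℝ → ℝ be continuously differentiable with F(0) = 0, F'(y) ≤ 0 for all y ∈ ℝ, F'(0) < 0, F'(y) ≥ −b₀ for all y ∈ ℝ for some constant b₀ > 0, and lim_{y→+∞} F'(y) = −l for some l > 0. Then there exist an admissible control u_* : [0,∞) → ℝ which is essentially bounded on every compact interval [0,T], and a trajectory x_* associated with u_*, such that the function t ↦ e^{-ρt}(log u_*(t) − c·x_*(t)²) is Lebesgue integrable on [0,∞), and for every admissible control u and every trajectory x associated with u for which t ↦ e^{-ρt}(log u(t) − c·x(t)²) is Lebesgue integrable on [0,∞), one has B(u,x) ≤ B(u_*,x_*). In other words, the shallow-lake optimal control problem admits a locally bounded optimal control in L¹_loc(0,∞). -/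
open MeasureTheory Filter

/-- A control `u` is admissible: measurable, locally integrable on `[0,∞)`,
and positive almost everywhere on `[0,∞)`. -/
def Admissible (u : ℝ → ℝ) : Prop :=
  Measurable u ∧ (∀ T : ℝ, 0 < T → IntegrableOn u (Set.Icc 0 T)) ∧
    (∀ᵐ t ∂(volume.restrict (Set.Ici (0:ℝ))), 0 < u t)

/-- `x` is a trajectory associated with the control `u`, dynamics `F` and
initial state `x₀`. -/
def Trajectory (F : ℝ → ℝ) (x₀ : ℝ) (u x : ℝ → ℝ) : Prop :=
  ContinuousOn x (Set.Ici 0) ∧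
    ∀ t : ℝ, 0 ≤ t → x t = x₀ + ∫ s in (0:ℝ)..t, (F (x s) + u s)

/-- The objective functional `B(u,x) = ∫₀^∞ e^{-ρt}(log u(t) - c x(t)²) dt`. -/
noncomputable def objective (ρ c : ℝ) (u x : ℝ → ℝ) : ℝ :=
  ∫ t in Set.Ioi (0:ℝ), Real.exp (-ρ * t) * (Real.log (u t) - c * (x t) ^ 2)

/-- Integrability of the integrand of the objective functional. -/
def ObjIntegrable (ρ c : ℝ) (u x : ℝ → ℝ) : Prop :=
  IntegrableOn (fun t => Real.exp (-ρ * t) * (Real.log (u t) - c * (x t) ^ 2))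
    (Set.Ioi (0:ℝ))

/-!
A pair with objective at least `-K` obeys a priori bounds: its energy `∫ e^{-ρt} x²` is bounded, as
otherwise the energy would satisfy a Riccati inequality and blow up; hence `x ≤ D e^{ρt/2}`; and
`e^{bt} x` stays above a positive constant from time `1` on, since a control with little mass on
`[0, 1]` has a very negative logarithm. Now truncate the control at the level `A e^{bt}` and
subtract from `x` the solution `y` of `y' = w - b y`, `y 0 = 0`, where `w` is the excess of the
control; the Lipschitz bound on `F` keeps the control of the new state above the truncated one.
This loses at most `w / (A e^{bt})` in the logarithm and gains at least `c x y` in the cost, and for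
large `A` the lower bound on `x` makes the gain dominate.

So it is enough to maximise over controls bounded by `P e^{κt}`. Along a maximising sequence the
controls converge weakly and the states pointwise, to a trajectory of the limit control. The
objective is upper semicontinuous along such sequences, by concavity of the logarithm on each
`[0, T]` and Fatou's lemma as `T → ∞`. The tangent lines of the logarithm are taken at `u + ε` and
`ε → 0` afterwards; a uniform bound as `ε → 0` also forces the limit control `u` to be positive
almost everywhere.
-/

open Set Real
open scoped Topology NNReal

section Calculus

theorem hasDerivAt_exp_const_mul (k t : ℝ) :
    HasDerivAt (fun t ↦ exp (k * t)) (k * exp (k * t)) t := by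
  simpa [mul_comm] using ((hasDerivAt_id t).const_mul k).exp

theorem one_div_succ_le_one (n : ℕ) : 1 / ((n : ℝ) + 1) ≤ 1 := by
  simpa only [one_div] using inv_le_one_of_one_le₀ (le_add_of_nonneg_left n.cast_nonneg)

theorem log_le_log_add_div {u v : ℝ} (hu : 0 < u) (hv : 0 < v) :
    log u ≤ log v + (u - v) / v := by
  have h := log_le_sub_one_of_pos (div_pos hu hv)
  rw [log_div hu.ne' hv.ne', ← div_self hv.ne', ← sub_div] at h
  linarith

theorem log_le_log_add_of_le_mul_exp {u P a : ℝ} (hu : 0 < u) (hP : 0 < P)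
    (h : u ≤ P * exp a) : log u ≤ log P + a := by
  rw [← log_exp a, ← log_mul hP.ne' (exp_pos a).ne']
  exact log_le_log hu h

theorem integral_deriv_mul_add_mul_eq_sub {a a' v X : ℝ → ℝ} {s t : ℝ}
    (ha : ∀ r, HasDerivAt a (a' r) r) (ha' : Continuous a') (hv : IntervalIntegrable v volume s t)
    (hX : ∀ r ∈ uIcc s t, X r = X s + ∫ q in s..r, v q) :
    ∫ r in s..t, (a' r * X r + a r * v r) = a t * X t - a s * X s := by
  have hda : deriv a = a' := funext fun r ↦ (ha r).deriv
  have ha_ac : AbsolutelyContinuousOnInterval a s t :=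
    (contDiff_one_iff_deriv.2
      ⟨fun r ↦ (ha r).differentiableAt, hda ▸ ha'⟩).contDiffOn.absolutelyContinuousOnInterval
  have hc_ac : AbsolutelyContinuousOnInterval (fun _ : ℝ ↦ X s) s t :=
    contDiff_const.contDiffOn.absolutelyContinuousOnInterval
  have hX_ac := hc_ac.add (hv.absolutelyContinuousOnInterval_intervalIntegral left_mem_uIcc)
  have hparts := ha_ac.integral_deriv_mul_eq_sub hX_ac
  simp only [Pi.add_apply, ← hX t right_mem_uIcc, intervalIntegral.integral_same, add_zero]
    at hparts
  rw [← hparts]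
  refine intervalIntegral.integral_congr_ae ?_
  filter_upwards [hv.ae_hasDerivAt_integral] with r hr hrst
  have hr' := uIoc_subset_uIcc hrst
  have hderiv := ((hasDerivAt_const r (X s)).add (hr hr' s left_mem_uIcc)).deriv
  rw [hda, hderiv, hX r hr', zero_add]

/-- `f' ≥ k f²` forces blow-up in finite time, because `-1 / f - k t` would be nondecreasing. -/
theorem exists_deriv_lt_mul_sq {f f' : ℝ → ℝ} {a k : ℝ} (hk : 0 < k)
    (hf : ∀ t, a ≤ t → HasDerivAt f (f' t) t) (hpos : ∀ t, a ≤ t → 0 < f t) :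
    ∃ t, a ≤ t ∧ f' t < k * f t ^ 2 := by
  by_contra! hle
  have hderiv : ∀ t ∈ Ici a, HasDerivAt (fun t ↦ -(f t)⁻¹ - k * t) (f' t / f t ^ 2 - k) t := by
    intro t ht
    refine (((hf t ht).inv (hpos t ht).ne').neg.sub ((hasDerivAt_id t).const_mul k)).congr_deriv ?_
    ring
  have hmono : MonotoneOn (fun t ↦ -(f t)⁻¹ - k * t) (Ici a) := by
    refine monotoneOn_of_hasDerivWithinAt_nonneg (convex_Ici a)
      (fun t ht ↦ (hderiv t ht).continuousAt.continuousWithinAt)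
      (fun t ht ↦ (hderiv t (interior_subset ht)).hasDerivWithinAt) fun t ht ↦ ?_
    rw [sub_nonneg, le_div_iff₀ (pow_pos (hpos t (interior_subset ht)) 2)]
    exact hle t (interior_subset ht)
  have hfa := hpos a le_rfl
  set t := a + (f a)⁻¹ / k
  have hat : a ≤ t := le_add_of_nonneg_right (by positivity)
  have hcmp := hmono self_mem_Ici hat hat
  have hft : 0 < (f t)⁻¹ := inv_pos.2 (hpos t hat)
  have hkt : k * t = k * a + (f a)⁻¹ := by simp only [t]; field_simp
  linarith

theorem exists_last_nonneg {f : ℝ → ℝ} {s t : ℝ} (hf : Continuous f) (hst : s ≤ t)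
    (hs : 0 ≤ f s) : ∃ r ∈ Icc s t, 0 ≤ f r ∧ ∀ q ∈ Ioc r t, f q < 0 := by
  obtain ⟨r, ⟨hr, hfr⟩, hmax⟩ :=
    (isCompact_Icc.inter_right (isClosed_Ici.preimage hf)).exists_isGreatest
      ⟨s, left_mem_Icc.2 hst, hs⟩
  refine ⟨r, hr, hfr, fun q hq ↦ not_le.1 fun hfq ↦ hq.1.not_ge ?_⟩
  exact hmax ⟨⟨hr.1.trans hq.1.le, hq.2⟩, hfq⟩

theorem integral_exp_neg_mul_le {ρ : ℝ} (hρ : 0 < ρ) (T : ℝ) :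
    ∫ r in (0 : ℝ)..T, exp (-ρ * r) ≤ 1 / ρ := by
  have hderiv : ∀ r ∈ uIcc 0 T, HasDerivAt (fun r ↦ -(1 / ρ) * exp (-ρ * r)) (exp (-ρ * r)) r :=
    fun r _ ↦ ((hasDerivAt_exp_const_mul (-ρ) r).const_mul _).congr_deriv (by field_simp)
  rw [intervalIntegral.integral_eq_sub_of_hasDerivAt hderiv
    (Continuous.intervalIntegrable (by fun_prop) _ _)]
  have : 0 ≤ 1 / ρ * exp (-ρ * T) := by positivity
  simp only [mul_zero, exp_zero]
  linarith

theorem integrableOn_Ioi_of_integral_le {f : ℝ → ℝ} {C : ℝ} (hf0 : ∀ t, 0 ≤ t → 0 ≤ f t)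
    (hf : ∀ T, IntervalIntegrable f volume 0 T)
    (hC : ∀ T, 0 ≤ T → ∫ t in (0 : ℝ)..T, f t ≤ C) : IntegrableOn f (Ioi 0) := by
  refine integrableOn_Ioi_of_intervalIntegral_norm_bounded C 0 (fun T ↦ (hf T).1) tendsto_id ?_
  filter_upwards [eventually_ge_atTop 0] with T hT
  refine (intervalIntegral.integral_congr fun t ht ↦ ?_).trans_le (hC T hT)
  exact norm_of_nonneg (hf0 t (uIcc_of_le hT ▸ ht).1)

theorem integral_Ioi_le_of_integral_le {f : ℝ → ℝ} {C : ℝ} (hf : IntegrableOn f (Ioi 0))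
    (hC : ∀ T, 0 ≤ T → ∫ t in (0 : ℝ)..T, f t ≤ C) : ∫ t in Ioi 0, f t ≤ C :=
  le_of_tendsto (intervalIntegral_tendsto_integral_Ioi 0 hf tendsto_id)
    ((eventually_ge_atTop 0).mono hC)

theorem integrableOn_exp_neg_mul_mul_add {ρ : ℝ} (hρ : 0 < ρ) (a k : ℝ) :
    IntegrableOn (fun t ↦ exp (-ρ * t) * (a + k * t)) (Ioi 0) := by
  have hconst : IntegrableOn (fun t ↦ exp (-ρ * t)) (Ioi 0) := exp_neg_integrableOn_Ioi 0 hρ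
  have hlin := integrableOn_rpow_mul_exp_neg_mul_rpow (s := 1) (p := 1) (by norm_num) one_pos hρ
  simp only [rpow_one] at hlin
  refine ((hconst.const_mul a).add (hlin.const_mul k)).congr (ae_of_all _ fun t ↦ ?_)
  simp only [Pi.add_apply]
  ring

section Primitive

variable {β : ℝ} {v Y : ℝ → ℝ}

/-- The boundary term is absorbed by the tail: `e^{-βT} Y T ≤ β ∫_T^∞ e^{-βt} Y t`, as `Y` is
nondecreasing. -/
theorem integral_exp_neg_mul_le_mul_integral_primitive (hβ : 0 < β) (hv0 : ∀ t, 0 ≤ v t)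
    (hv : ∀ s t, IntervalIntegrable v volume s t)
    (hY : ∀ t, 0 ≤ t → Y t = ∫ s in (0 : ℝ)..t, v s)
    (hQ : IntegrableOn (fun t ↦ exp (-β * t) * Y t) (Ioi 0)) {T : ℝ} (hT : 0 ≤ T) :
    ∫ t in (0 : ℝ)..T, exp (-β * t) * v t ≤ β * ∫ t in Ioi 0, exp (-β * t) * Y t := by
  have hY0 : Y 0 = 0 := by simpa using hY 0 le_rfl
  have hQT := hQ.mono_set (Ioi_subset_Ioi hT)
  have hQ0T : IntervalIntegrable (fun t ↦ exp (-β * t) * Y t) volume 0 T :=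
    (intervalIntegrable_iff_integrableOn_Ioc_of_le hT).2 (hQ.mono_set Ioc_subset_Ioi_self)
  have hparts := integral_deriv_mul_add_mul_eq_sub (hasDerivAt_exp_const_mul (-β)) (by fun_prop)
    (hv 0 T) (X := Y) fun r hr ↦ by
      rw [hY0, zero_add, hY r (uIcc_of_le hT ▸ hr).1]
  have htail : exp (-β * T) * Y T ≤ β * ∫ t in Ioi T, exp (-β * t) * Y t := calc
    exp (-β * T) * Y T = β * ∫ t in Ioi T, exp (-β * t) * Y T := by
        rw [integral_mul_const, integral_exp_mul_Ioi (neg_lt_zero.2 hβ)]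
        field_simp
    _ ≤ _ := by
        refine mul_le_mul_of_nonneg_left (setIntegral_mono_on
          ((integrableOn_exp_mul_Ioi (neg_lt_zero.2 hβ) T).mul_const _) hQT measurableSet_Ioi
          fun t ht ↦ mul_le_mul_of_nonneg_left ?_ (exp_pos _).le) hβ.le
        rw [hY T hT, hY t (hT.trans (le_of_lt ht))]
        exact intervalIntegral.integral_mono_interval le_rfl hT (le_of_lt ht)
          (ae_of_all _ hv0) (hv 0 t)
  rw [intervalIntegral.integral_add ((hQ0T.const_mul (-β)).congr fun t _ ↦ by ring)
    ((hv 0 T).continuousOn_mul (by fun_prop)), hY0, mul_zero, sub_zero] at hparts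
  simp only [mul_assoc, intervalIntegral.integral_const_mul] at hparts
  rw [← intervalIntegral.integral_interval_add_Ioi hQ hQT]
  linarith

theorem integral_Ioi_zero_exp_neg_mul_le (hY : MonotoneOn Y (Ici 0))
    (hQ : IntegrableOn (fun t ↦ exp (-β * t) * Y t) (Ioi 0)) :
    ∫ t in Ioi 0, exp (-β * t) * Y t ≤ exp β * ∫ t in Ioi 1, exp (-β * t) * Y t := by
  have hmp := measurePreserving_add_right volume (1 : ℝ)
  have hemb := measurableEmbedding_addRight (1 : ℝ)
  have hpre : (fun t : ℝ ↦ t + 1) ⁻¹' Ioi 1 = Ioi 0 := by simp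
  have hQ1 : IntegrableOn (fun t ↦ exp (-β * (t + 1)) * Y (t + 1)) (Ioi 0) :=
    hpre ▸ (hmp.integrableOn_comp_preimage hemb).2
      (hQ.mono_set (Ioi_subset_Ioi zero_le_one))
  have hshift := hmp.setIntegral_preimage_emb hemb (fun t ↦ exp (-β * t) * Y t) (Ioi 1)
  rw [← hshift, hpre, ← integral_const_mul]
  refine setIntegral_mono_on hQ (hQ1.const_mul _) measurableSet_Ioi fun t ht ↦ ?_
  have ht0 : 0 ≤ t := le_of_lt ht
  calc exp (-β * t) * Y t ≤ exp (-β * t) * Y (t + 1) :=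
        mul_le_mul_of_nonneg_left
          (hY ht0 (add_nonneg ht0 zero_le_one) (le_add_of_nonneg_right zero_le_one)) (exp_pos _).le
    _ = exp β * (exp (-β * (t + 1)) * Y (t + 1)) := by
        rw [← mul_assoc, ← exp_add]
        ring_nf

end Primitive

end Calculus

/-- Dynamics with equilibrium `0` that dissipate at rate at most `b`; for differentiable `F` this
says `-b ≤ F' ≤ 0`. -/
structure IsDissipative (F : ℝ → ℝ) (b : ℝ≥0) : Prop where
  antitone : Antitone F
  lipschitz : LipschitzWith b F
  map_zero : F 0 = 0

namespace IsDissipative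

variable {F : ℝ → ℝ} {b : ℝ≥0} {y z : ℝ}

theorem nonpos (hF : IsDissipative F b) (hy : 0 ≤ y) : F y ≤ 0 :=
  hF.map_zero ▸ hF.antitone hy

theorem nonneg (hF : IsDissipative F b) (hy : y ≤ 0) : 0 ≤ F y :=
  hF.map_zero ▸ hF.antitone hy

theorem sub_le_mul_sub (hF : IsDissipative F b) (hyz : y ≤ z) : F y - F z ≤ b * (z - y) := by
  have h := hF.lipschitz.dist_le_mul y z
  rw [dist_eq, dist_comm, dist_eq, abs_of_nonneg (sub_nonneg.2 hyz)] at h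
  exact (le_abs_self _).trans h

theorem neg_mul_le (hF : IsDissipative F b) (hy : 0 ≤ y) : -(b * y) ≤ F y := by
  have h := hF.sub_le_mul_sub hy
  rw [hF.map_zero, sub_zero] at h
  linarith

end IsDissipative

/-- An everywhere positive control and a trajectory of it that is continuous on all of `ℝ`; the
values at negative times carry no information. -/
structure IsControlPair (F : ℝ → ℝ) (x₀ : ℝ) (u x : ℝ → ℝ) : Prop where
  measurable : Measurable u
  pos : ∀ t, 0 < u t
  intervalIntegrable : ∀ s t, IntervalIntegrable u volume s t
  continuous : Continuous x
  eq_add_integral : ∀ t, 0 ≤ t → x t = x₀ + ∫ s in (0 : ℝ)..t, (F (x s) + u s)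

namespace IsControlPair

variable {F : ℝ → ℝ} {b : ℝ≥0} {x₀ : ℝ} {u x : ℝ → ℝ} {s t : ℝ}

theorem state_zero (h : IsControlPair F x₀ u x) : x 0 = x₀ := by
  simpa using h.eq_add_integral 0 le_rfl

theorem measurable_integrand (h : IsControlPair F x₀ u x) (ρ c : ℝ) :
    Measurable fun t ↦ exp (-ρ * t) * (log (u t) - c * x t ^ 2) :=
  have hx := h.continuous.measurable
  have hu := h.measurable
  by fun_prop

theorem intervalIntegrable_exp_mul (h : IsControlPair F x₀ u x) (k s t : ℝ) :
    IntervalIntegrable (fun r ↦ exp (k * r) * u r) volume s t :=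
  (h.intervalIntegrable s t).continuousOn_mul (by fun_prop)

theorem intervalIntegrable_rhs (h : IsControlPair F x₀ u x) (hF : Continuous F) (s t : ℝ) :
    IntervalIntegrable (fun r ↦ F (x r) + u r) volume s t :=
  ((hF.comp h.continuous).intervalIntegrable s t).add (h.intervalIntegrable s t)

theorem eq_add_integral_of_le (h : IsControlPair F x₀ u x) (hF : Continuous F) (hs : 0 ≤ s)
    (ht : 0 ≤ t) : x t = x s + ∫ r in s..t, (F (x r) + u r) := by
  rw [h.eq_add_integral t ht, h.eq_add_integral s hs, add_assoc,
    intervalIntegral.integral_add_adjacent_intervals (h.intervalIntegrable_rhs hF 0 s)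
      (h.intervalIntegrable_rhs hF s t)]

theorem state_nonneg (h : IsControlPair F x₀ u x) (hF : IsDissipative F b) (hx₀ : 0 ≤ x₀)
    (ht : 0 ≤ t) : 0 ≤ x t := by
  obtain ⟨r, hr, hxr, hneg⟩ := exists_last_nonneg h.continuous ht (h.state_zero.symm ▸ hx₀)
  have hgrow : 0 ≤ ∫ q in r..t, (F (x q) + u q) := by
    rw [intervalIntegral.integral_of_le hr.2]
    exact setIntegral_nonneg measurableSet_Ioc fun q hq ↦
      add_nonneg (hF.nonneg (hneg q hq).le) (h.pos q).le
  rw [h.eq_add_integral_of_le hF.lipschitz.continuous hr.1 ht]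
  exact add_nonneg hxr hgrow

theorem exp_mul_state_add_integral (h : IsControlPair F x₀ u x) (hF : Continuous F) (k : ℝ)
    (hs : 0 ≤ s) (ht : 0 ≤ t) :
    exp (k * s) * x s + ∫ r in s..t, (k * exp (k * r) * x r + exp (k * r) * (F (x r) + u r)) =
      exp (k * t) * x t := by
  rw [integral_deriv_mul_add_mul_eq_sub (hasDerivAt_exp_const_mul k) (by fun_prop)
    (h.intervalIntegrable_rhs hF s t)]
  · ring
  · exact fun r hr ↦ h.eq_add_integral_of_le hF hs ((le_min hs ht).trans hr.1)

theorem exp_mul_state_add_integral_le (h : IsControlPair F x₀ u x) (hF : IsDissipative F b)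
    (hx₀ : 0 ≤ x₀) (hs : 0 ≤ s) (hst : s ≤ t) :
    exp (b * s) * x s + ∫ r in s..t, exp (b * r) * u r ≤ exp (b * t) * x t := by
  have hx := h.continuous
  have hFc := hF.lipschitz.continuous
  rw [← h.exp_mul_state_add_integral hFc b hs (hs.trans hst)]
  gcongr
  refine intervalIntegral.integral_mono_on hst (h.intervalIntegrable_exp_mul b s t)
    ((Continuous.intervalIntegrable (by fun_prop) s t).add
      ((h.intervalIntegrable_rhs hFc s t).continuousOn_mul (by fun_prop))) fun r hr ↦ ?_
  have hFx := hF.neg_mul_le (h.state_nonneg hF hx₀ (hs.trans hr.1))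
  calc exp (b * r) * u r ≤ exp (b * r) * (b * x r + (F (x r) + u r)) := by gcongr; linarith
    _ = _ := by ring

theorem monotoneOn_exp_mul_state (h : IsControlPair F x₀ u x) (hF : IsDissipative F b)
    (hx₀ : 0 ≤ x₀) : MonotoneOn (fun t ↦ exp (b * t) * x t) (Ici 0) := by
  intro s hs t _ hst
  have hu : 0 ≤ ∫ r in s..t, exp (b * r) * u r :=
    intervalIntegral.integral_nonneg hst fun r _ ↦ mul_nonneg (exp_pos _).le (h.pos r).le
  linarith [h.exp_mul_state_add_integral_le hF hx₀ hs hst]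

theorem exp_neg_mul_state_le (h : IsControlPair F x₀ u x) (hF : IsDissipative F b)
    (hx₀ : 0 ≤ x₀) (ht : 0 ≤ t) {r : ℝ} (hr : r ∈ Icc t (t + 1)) : exp (-b) * x t ≤ x r := by
  have hxr := h.state_nonneg hF hx₀ (ht.trans hr.1)
  calc exp (-b) * x t = exp (-(b * (t + 1))) * (exp (b * t) * x t) := by
        rw [← mul_assoc, ← exp_add]
        ring_nf
    _ ≤ exp (-(b * (t + 1))) * (exp (b * r) * x r) := by
        exact mul_le_mul_of_nonneg_left
          (h.monotoneOn_exp_mul_state hF hx₀ ht (ht.trans hr.1) hr.1) (exp_pos _).le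
    _ = exp (-(b * (t + 1 - r))) * x r := by
        rw [← mul_assoc, ← exp_add]
        ring_nf
    _ ≤ 1 * x r := by
        gcongr
        exact exp_le_one_iff.2 (neg_nonpos.2 (mul_nonneg b.2 (sub_nonneg.2 hr.2)))
    _ = x r := one_mul _

theorem integral_exp_neg_mul_control_le (h : IsControlPair F x₀ u x) (hF : IsDissipative F b)
    (hx₀ : 0 ≤ x₀) (ρ : ℝ) {T : ℝ} (hT : 0 ≤ T) :
    ∫ r in (0 : ℝ)..T, exp (-ρ * r) * u r ≤
      exp (-ρ * T) * x T + (ρ + b) * ∫ r in (0 : ℝ)..T, exp (-ρ * r) * x r := by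
  have hx := h.continuous
  have hFc := hF.lipschitz.continuous
  have hint : IntervalIntegrable
      (fun r ↦ -ρ * exp (-ρ * r) * x r + exp (-ρ * r) * (F (x r) + u r)) volume 0 T :=
    (Continuous.intervalIntegrable (by fun_prop) 0 T).add
      ((h.intervalIntegrable_rhs hFc 0 T).continuousOn_mul (by fun_prop))
  have hint' : IntervalIntegrable (fun r ↦ (ρ + b) * (exp (-ρ * r) * x r)) volume 0 T :=
    Continuous.intervalIntegrable (by fun_prop) 0 T
  calc ∫ r in (0 : ℝ)..T, exp (-ρ * r) * u r
      ≤ ∫ r in (0 : ℝ)..T, (-ρ * exp (-ρ * r) * x r + exp (-ρ * r) * (F (x r) + u r) +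
          (ρ + b) * (exp (-ρ * r) * x r)) := by
        refine intervalIntegral.integral_mono_on hT (h.intervalIntegrable_exp_mul (-ρ) 0 T)
          (hint.add hint') fun r hr ↦ ?_
        have hFx := hF.neg_mul_le (h.state_nonneg hF hx₀ hr.1)
        calc exp (-ρ * r) * u r ≤ exp (-ρ * r) * (b * x r + (F (x r) + u r)) := by
              gcongr; linarith
          _ = _ := by ring
    _ ≤ _ := by
        rw [intervalIntegral.integral_add hint hint', intervalIntegral.integral_const_mul,
          ← h.exp_mul_state_add_integral hFc (-ρ) le_rfl hT]
        have : 0 ≤ exp (-ρ * 0) * x 0 :=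
          mul_nonneg (exp_pos _).le (h.state_nonneg hF hx₀ le_rfl)
        linarith

/-- The last term of `integral_exp_neg_mul_control_le`, absorbed by Young's inequality into half
of the cost of the state. -/
theorem integral_exp_neg_mul_control_le_energy (h : IsControlPair F x₀ u x)
    (hF : IsDissipative F b) (hx₀ : 0 ≤ x₀) {ρ c T : ℝ} (hρ : 0 < ρ) (hc : 0 < c) (hT : 0 ≤ T) :
    ∫ r in (0 : ℝ)..T, exp (-ρ * r) * u r ≤ exp (-ρ * T) * x T +
      c / 2 * (∫ r in (0 : ℝ)..T, exp (-ρ * r) * x r ^ 2) + (ρ + b) ^ 2 / (2 * c * ρ) := by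
  have hx := h.continuous
  have hyoung : (ρ + b) * ∫ r in (0 : ℝ)..T, exp (-ρ * r) * x r ≤
      c / 2 * (∫ r in (0 : ℝ)..T, exp (-ρ * r) * x r ^ 2) +
        (ρ + b) ^ 2 / (2 * c) * ∫ r in (0 : ℝ)..T, exp (-ρ * r) := by
    simp only [← intervalIntegral.integral_const_mul]
    rw [← intervalIntegral.integral_add (Continuous.intervalIntegrable (by fun_prop) _ _)
      (Continuous.intervalIntegrable (by fun_prop) _ _)]
    refine intervalIntegral.integral_mono_on hT (Continuous.intervalIntegrable (by fun_prop) _ _)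
      (Continuous.intervalIntegrable (by fun_prop) _ _) fun r _ ↦ ?_
    have hsq : 0 ≤ exp (-ρ * r) * ((c * x r - (ρ + b)) ^ 2 / (2 * c)) := by positivity
    have hid : exp (-ρ * r) * ((c * x r - (ρ + b)) ^ 2 / (2 * c)) =
        c / 2 * (exp (-ρ * r) * x r ^ 2) + (ρ + b) ^ 2 / (2 * c) * exp (-ρ * r) -
          (ρ + b) * (exp (-ρ * r) * x r) := by field_simp; ring
    linarith
  calc _ ≤ _ := h.integral_exp_neg_mul_control_le hF hx₀ ρ hT
    _ ≤ exp (-ρ * T) * x T + (c / 2 * (∫ r in (0 : ℝ)..T, exp (-ρ * r) * x r ^ 2) +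
          (ρ + b) ^ 2 / (2 * c) * (1 / ρ)) := by
        gcongr
        refine hyoung.trans ?_
        gcongr
        exact integral_exp_neg_mul_le hρ T
    _ = _ := by field_simp; ring

end IsControlPair

/-- Bound on the energy `∫ e^{-ρt} x²` of competitive pairs. -/
noncomputable def energyBound (ρ c K : ℝ) (b : ℝ≥0) : ℝ :=
  4 * |K + 1 + (ρ + b) ^ 2 / (2 * c * ρ)| / c

/-- Bound on `e^{-ρt/2} x` for competitive pairs. -/
noncomputable def stateBound (ρ c K : ℝ) (b : ℝ≥0) : ℝ :=
  √(energyBound ρ c K b) * exp (ρ / 2 + b)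

/-- Bound on `∫ e^{-ρt} u` for competitive pairs. -/
noncomputable def controlBound (ρ c K : ℝ) (b : ℝ≥0) : ℝ :=
  stateBound ρ c K b + c / 2 * energyBound ρ c K b + (ρ + b) ^ 2 / (2 * c * ρ)

/-- Lower bound on `e^{bt} x`, valid for competitive pairs from time `1` on. -/
noncomputable def stateFloor (ρ c K : ℝ) (b : ℝ≥0) : ℝ :=
  exp (-(exp ρ * (|K + 1 + controlBound ρ c K b| + 1)))

theorem stateFloor_pos (ρ c K : ℝ) (b : ℝ≥0) : 0 < stateFloor ρ c K b :=
  exp_pos _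

theorem stateBound_nonneg (ρ c K : ℝ) (b : ℝ≥0) : 0 ≤ stateBound ρ c K b :=
  mul_nonneg (sqrt_nonneg _) (exp_pos _).le

/-- Control pairs whose objective is at least `-K`. The a priori estimates are uniform over this
class, which contains a maximising sequence. -/
structure IsCompetitive (ρ c K : ℝ) (F : ℝ → ℝ) (x₀ : ℝ) (u x : ℝ → ℝ) : Prop
    extends IsControlPair F x₀ u x where
  objIntegrable : ObjIntegrable ρ c u x
  neg_le_objective : -K ≤ objective ρ c u x

namespace IsCompetitive

variable {ρ c K : ℝ} {F : ℝ → ℝ} {b : ℝ≥0} {x₀ : ℝ} {u x : ℝ → ℝ}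

theorem intervalIntegrable_exp_mul_log (h : IsCompetitive ρ c K F x₀ u x) {s t : ℝ} (hs : 0 ≤ s)
    (ht : 0 ≤ t) : IntervalIntegrable (fun r ↦ exp (-ρ * r) * log (u r)) volume s t := by
  have hx := h.continuous
  have hobj : IntervalIntegrable (fun r ↦ exp (-ρ * r) * (log (u r) - c * x r ^ 2)) volume s t :=
    intervalIntegrable_iff.2
      (h.objIntegrable.mono_set (Ioc_subset_Ioi_self.trans (Ioi_subset_Ioi (le_min hs ht))))
  have hcost : IntervalIntegrable (fun r ↦ c * (exp (-ρ * r) * x r ^ 2)) volume s t :=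
    Continuous.intervalIntegrable (by fun_prop) s t
  refine (hobj.add hcost).congr fun r _ ↦ ?_
  ring

theorem eventually_le_integral (h : IsCompetitive ρ c K F x₀ u x) :
    ∀ᶠ T in atTop, -(K + 1) + c * (∫ r in (0 : ℝ)..T, exp (-ρ * r) * x r ^ 2) ≤
      ∫ r in (0 : ℝ)..T, exp (-ρ * r) * log (u r) := by
  have hx := h.continuous
  have hlt : -(K + 1) < objective ρ c u x := by linarith [h.neg_le_objective]
  filter_upwards [eventually_ge_atTop 0, (intervalIntegral_tendsto_integral_Ioi 0 h.objIntegrable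
    tendsto_id).eventually_const_lt hlt] with T hT hKT
  have hsplit : ∫ r in (0 : ℝ)..T, exp (-ρ * r) * (log (u r) - c * x r ^ 2) =
      (∫ r in (0 : ℝ)..T, exp (-ρ * r) * log (u r)) -
        c * ∫ r in (0 : ℝ)..T, exp (-ρ * r) * x r ^ 2 := by
    rw [← intervalIntegral.integral_const_mul, ← intervalIntegral.integral_sub
      (h.intervalIntegrable_exp_mul_log le_rfl hT)
      (Continuous.intervalIntegrable (by fun_prop) _ _)]
    congr with r
    ring
  rw [id, hsplit] at hKT
  linarith

theorem integral_exp_mul_log_le (h : IsCompetitive ρ c K F x₀ u x) {s t : ℝ} (hs : 0 ≤ s)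
    (hst : s ≤ t) :
    ∫ r in s..t, exp (-ρ * r) * log (u r) ≤ ∫ r in s..t, exp (-ρ * r) * u r := by
  refine intervalIntegral.integral_mono_on hst
    (h.intervalIntegrable_exp_mul_log hs (hs.trans hst))
    (h.intervalIntegrable_exp_mul (-ρ) s t) fun r _ ↦ ?_
  have := log_le_self (h.pos r).le
  gcongr

theorem eventually_energy_le (h : IsCompetitive ρ c K F x₀ u x) (hF : IsDissipative F b)
    (hx₀ : 0 ≤ x₀) (hρ : 0 < ρ) (hc : 0 < c) :
    ∀ᶠ T in atTop, c / 2 * (∫ r in (0 : ℝ)..T, exp (-ρ * r) * x r ^ 2) ≤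
      K + 1 + (ρ + b) ^ 2 / (2 * c * ρ) + exp (-ρ * T) * x T := by
  filter_upwards [eventually_ge_atTop 0, h.eventually_le_integral] with T hT hKT
  have hlog := h.integral_exp_mul_log_le le_rfl hT
  have hu := h.integral_exp_neg_mul_control_le_energy hF hx₀ hρ hc hT
  linarith

/-- Were the energy `I T = ∫₀ᵀ e^{-ρr} x²` large, `eventually_energy_le` would give
`c I / 4 ≤ e^{-ρT} x` and hence the Riccati inequality `I' ≥ (c / 4)² I²`. -/
theorem energy_le (h : IsCompetitive ρ c K F x₀ u x) (hF : IsDissipative F b)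
    (hx₀ : 0 ≤ x₀) (hρ : 0 < ρ) (hc : 0 < c) (T : ℝ) :
    ∫ r in (0 : ℝ)..T, exp (-ρ * r) * x r ^ 2 ≤ energyBound ρ c K b := by
  set I : ℝ → ℝ := fun T ↦ ∫ r in (0 : ℝ)..T, exp (-ρ * r) * x r ^ 2
  have hx := h.continuous
  have hderiv (t : ℝ) : HasDerivAt I (exp (-ρ * t) * x t ^ 2) t :=
    Continuous.deriv_integral (f := fun r ↦ exp (-ρ * r) * x r ^ 2) (by fun_prop) 0 t ▸
      (intervalIntegral.differentiable_integral_of_continuous (by fun_prop) t).hasDerivAt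
  have hmono : Monotone I := monotone_of_hasDerivAt_nonneg hderiv fun t ↦ by positivity
  by_contra! hlarge
  unfold energyBound at hlarge
  set C := K + 1 + (ρ + b) ^ 2 / (2 * c * ρ)
  obtain ⟨T₁, hT₁⟩ := eventually_atTop.1 (h.eventually_energy_le hF hx₀ hρ hc)
  have hI (t : ℝ) (ht : max T (max T₁ 0) ≤ t) : 4 * |C| / c < I t :=
    hlarge.trans_le (hmono ((le_max_left _ _).trans ht))
  obtain ⟨t, ht, hlt⟩ := exists_deriv_lt_mul_sq (k := (c / 4) ^ 2) (by positivity)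
    (fun t _ ↦ hderiv t) (fun t ht ↦ lt_of_le_of_lt (by positivity) (hI t ht))
  obtain ⟨-, hT₁t, ht0⟩ : T ≤ t ∧ T₁ ≤ t ∧ 0 ≤ t := by simpa only [max_le_iff] using ht
  have hIt := hI t ht
  have hC : C < c / 4 * I t := by
    rw [div_lt_iff₀ hc] at hIt
    linarith [le_abs_self C]
  have hstate : c / 4 * I t ≤ exp (-ρ * t) * x t := by linarith [hT₁ t hT₁t]
  have hIt0 : 0 ≤ I t := (by positivity : 0 ≤ 4 * |C| / c).trans hIt.le
  refine hlt.not_ge ?_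
  calc (c / 4) ^ 2 * I t ^ 2 = (c / 4 * I t) ^ 2 := by ring
    _ ≤ (exp (-ρ * t) * x t) ^ 2 := by gcongr
    _ = exp (-ρ * t) * (exp (-ρ * t) * x t ^ 2) := by ring
    _ ≤ 1 * (exp (-ρ * t) * x t ^ 2) := by
        gcongr
        exact exp_le_one_iff.2 (by nlinarith)
    _ = _ := one_mul _

theorem state_le (h : IsCompetitive ρ c K F x₀ u x) (hF : IsDissipative F b) (hx₀ : 0 ≤ x₀)
    (hρ : 0 < ρ) (hc : 0 < c) {t : ℝ} (ht : 0 ≤ t) :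
    x t ≤ stateBound ρ c K b * exp (ρ / 2 * t) := by
  have hx := h.continuous
  have hint (s t : ℝ) : IntervalIntegrable (fun r ↦ exp (-ρ * r) * x r ^ 2) volume s t :=
    Continuous.intervalIntegrable (by fun_prop) s t
  have hsq : (exp (-(ρ / 2 * (t + 1) + b)) * x t) ^ 2 ≤ energyBound ρ c K b := calc
    (exp (-(ρ / 2 * (t + 1) + b)) * x t) ^ 2
      = ∫ _ in t..t + 1, exp (-ρ * (t + 1)) * (exp (-b) * x t) ^ 2 := by
        simp only [intervalIntegral.integral_const, add_sub_cancel_left, one_smul, mul_pow,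
          ← exp_nat_mul, ← mul_assoc, ← exp_add]
        ring_nf
    _ ≤ ∫ r in t..t + 1, exp (-ρ * r) * x r ^ 2 := by
        refine intervalIntegral.integral_mono_on (by linarith) (by simp) (hint _ _) fun r hr ↦ ?_
        have hxt := h.state_nonneg hF hx₀ ht
        have hxr := h.exp_neg_mul_state_le hF hx₀ ht hr
        have hexp : exp (-ρ * (t + 1)) ≤ exp (-ρ * r) := exp_le_exp.2 (by nlinarith [hr.2])
        gcongr
    _ ≤ ∫ r in (0 : ℝ)..t + 1, exp (-ρ * r) * x r ^ 2 := by
        rw [← intervalIntegral.integral_add_adjacent_intervals (hint 0 t) (hint t (t + 1))]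
        exact le_add_of_nonneg_left
          (intervalIntegral.integral_nonneg ht fun r _ ↦ by positivity)
    _ ≤ _ := h.energy_le hF hx₀ hρ hc _
  calc x t = exp (-(ρ / 2 * (t + 1) + b)) * x t * exp (ρ / 2 * (t + 1) + b) := by
        rw [mul_right_comm, ← exp_add, neg_add_cancel, exp_zero, one_mul]
    _ ≤ √(energyBound ρ c K b) * exp (ρ / 2 * (t + 1) + b) := by
        gcongr
        exact le_sqrt_of_sq_le hsq
    _ = _ := by
        rw [stateBound, mul_assoc, ← exp_add]
        ring_nf

theorem integral_control_le (h : IsCompetitive ρ c K F x₀ u x) (hF : IsDissipative F b)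
    (hx₀ : 0 ≤ x₀) (hρ : 0 < ρ) (hc : 0 < c) {T : ℝ} (hT : 0 ≤ T) :
    ∫ r in (0 : ℝ)..T, exp (-ρ * r) * u r ≤ controlBound ρ c K b := by
  have hboundary : exp (-ρ * T) * x T ≤ stateBound ρ c K b := calc
    exp (-ρ * T) * x T ≤ exp (-ρ * T) * (stateBound ρ c K b * exp (ρ / 2 * T)) := by
        gcongr
        exact h.state_le hF hx₀ hρ hc hT
    _ = stateBound ρ c K b * exp (-(ρ / 2 * T)) := by
        rw [mul_left_comm, ← exp_add]
        ring_nf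
    _ ≤ stateBound ρ c K b * 1 :=
        mul_le_mul_of_nonneg_left (exp_le_one_iff.2 (neg_nonpos.2 (by positivity)))
          (stateBound_nonneg ρ c K b)
    _ = _ := mul_one _
  refine (h.integral_exp_neg_mul_control_le_energy hF hx₀ hρ hc hT).trans ?_
  unfold controlBound
  gcongr
  exact h.energy_le hF hx₀ hρ hc T

theorem neg_le_integral_exp_mul_log (h : IsCompetitive ρ c K F x₀ u x) (hF : IsDissipative F b)
    (hx₀ : 0 ≤ x₀) (hρ : 0 < ρ) (hc : 0 < c) :
    -(K + 1 + controlBound ρ c K b) ≤ ∫ r in (0 : ℝ)..1, exp (-ρ * r) * log (u r) := by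
  obtain ⟨T, hKT, hT⟩ := (h.eventually_le_integral.and (eventually_ge_atTop 1)).exists
  have hT0 : 0 ≤ T := zero_le_one.trans hT
  have henergy : 0 ≤ c * ∫ r in (0 : ℝ)..T, exp (-ρ * r) * x r ^ 2 :=
    mul_nonneg hc.le (intervalIntegral.integral_nonneg hT0 fun r _ ↦ by positivity)
  have hu01 : 0 ≤ ∫ r in (0 : ℝ)..1, exp (-ρ * r) * u r :=
    intervalIntegral.integral_nonneg zero_le_one fun r _ ↦ mul_nonneg (exp_pos _).le (h.pos r).le
  have hlog := h.integral_exp_mul_log_le zero_le_one hT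
  have hu := h.integral_control_le hF hx₀ hρ hc hT0
  rw [← intervalIntegral.integral_add_adjacent_intervals
    (h.intervalIntegrable_exp_mul (-ρ) 0 1) (h.intervalIntegrable_exp_mul (-ρ) 1 T)] at hu
  rw [← intervalIntegral.integral_add_adjacent_intervals
    (h.intervalIntegrable_exp_mul_log le_rfl zero_le_one)
    (h.intervalIntegrable_exp_mul_log zero_le_one hT0)] at hKT
  linarith

/-- A control with little mass on `[0, 1]` has a very negative logarithm there, by the tangent
line of `log` at `stateFloor`. -/
theorem stateFloor_le_integral (h : IsCompetitive ρ c K F x₀ u x) (hF : IsDissipative F b)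
    (hx₀ : 0 ≤ x₀) (hρ : 0 < ρ) (hc : 0 < c) :
    stateFloor ρ c K b ≤ ∫ r in (0 : ℝ)..1, exp (-ρ * r) * u r := by
  set θ := stateFloor ρ c K b with hθ
  set M := K + 1 + controlBound ρ c K b with hM
  have hθ0 : 0 < θ := stateFloor_pos ρ c K b
  have hlogθ : log θ = -(exp ρ * (|M| + 1)) := by rw [hθ, stateFloor, log_exp]
  have htangent : ∫ r in (0 : ℝ)..1, exp (-ρ * r) * log (u r) ≤
      ∫ r in (0 : ℝ)..1, (θ⁻¹ * (exp (-ρ * r) * u r) - (|M| + 1)) := by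
    refine intervalIntegral.integral_mono_on zero_le_one
      (h.intervalIntegrable_exp_mul_log le_rfl zero_le_one)
      (((h.intervalIntegrable_exp_mul (-ρ) 0 1).const_mul _).sub (by simp)) fun r hr ↦ ?_
    have hlog := log_le_log_add_div (h.pos r) hθ0
    have hexp : 1 ≤ exp (-ρ * r) * exp ρ := by
      rw [← exp_add]
      exact one_le_exp (by nlinarith [hr.2])
    calc exp (-ρ * r) * log (u r) ≤ exp (-ρ * r) * (log θ + u r / θ) := by
          gcongr
          rw [sub_div, div_self hθ0.ne'] at hlog
          linarith
      _ = θ⁻¹ * (exp (-ρ * r) * u r) - exp (-ρ * r) * exp ρ * (|M| + 1) := by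
          rw [hlogθ]
          ring
      _ ≤ θ⁻¹ * (exp (-ρ * r) * u r) - 1 * (|M| + 1) := by gcongr
      _ = _ := by rw [one_mul]
  have hlow := (h.neg_le_integral_exp_mul_log hF hx₀ hρ hc).trans htangent
  rw [intervalIntegral.integral_sub ((h.intervalIntegrable_exp_mul (-ρ) 0 1).const_mul _)
    (by simp), intervalIntegral.integral_const_mul, ← hM] at hlow
  simp only [intervalIntegral.integral_const, sub_zero, one_smul] at hlow
  rw [← one_le_inv_mul₀ hθ0]
  linarith [le_abs_self M]

theorem stateFloor_le (h : IsCompetitive ρ c K F x₀ u x) (hF : IsDissipative F b)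
    (hx₀ : 0 ≤ x₀) (hρ : 0 < ρ) (hc : 0 < c) {t : ℝ} (ht : 1 ≤ t) :
    stateFloor ρ c K b ≤ exp (b * t) * x t := by
  calc stateFloor ρ c K b ≤ ∫ r in (0 : ℝ)..1, exp (-ρ * r) * u r :=
        h.stateFloor_le_integral hF hx₀ hρ hc
    _ ≤ ∫ r in (0 : ℝ)..1, exp (b * r) * u r := by
        refine intervalIntegral.integral_mono_on zero_le_one
          (h.intervalIntegrable_exp_mul (-ρ) 0 1) (h.intervalIntegrable_exp_mul b 0 1) fun r hr ↦ ?_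
        have hu := (h.pos r).le
        have hexp : exp (-ρ * r) ≤ exp (b * r) :=
          exp_le_exp.2 (mul_le_mul_of_nonneg_right (by linarith [b.2]) hr.1)
        gcongr
    _ ≤ exp (b * 0) * x 0 + ∫ r in (0 : ℝ)..1, exp (b * r) * u r :=
        le_add_of_nonneg_left (mul_nonneg (exp_pos _).le (h.state_nonneg hF hx₀ le_rfl))
    _ ≤ exp (b * 1) * x 1 := h.exp_mul_state_add_integral_le hF hx₀ le_rfl zero_le_one
    _ ≤ _ := h.monotoneOn_exp_mul_state hF hx₀ (mem_Ici.2 zero_le_one)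
        (mem_Ici.2 (zero_le_one.trans ht)) ht

theorem integrableOn_exp_mul_sq (h : IsCompetitive ρ c K F x₀ u x) (hF : IsDissipative F b)
    (hx₀ : 0 ≤ x₀) (hρ : 0 < ρ) (hc : 0 < c) :
    IntegrableOn (fun t ↦ exp (-ρ * t) * x t ^ 2) (Ioi 0) := by
  have hx := h.continuous
  exact integrableOn_Ioi_of_integral_le (fun t _ ↦ by positivity)
    (fun T ↦ Continuous.intervalIntegrable (by fun_prop) 0 T)
    fun T _ ↦ h.energy_le hF hx₀ hρ hc T

end IsCompetitive

section Reduction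

/-- The solution for `t ≥ 0` of `y' = w - b y`, `y 0 = 0`: the part of the state removed by
withdrawing `w` from the control. -/
noncomputable def removedState (b : ℝ≥0) (w : ℝ → ℝ) (t : ℝ) : ℝ :=
  exp (-b * t) * ∫ s in (0 : ℝ)..max t 0, exp (b * s) * w s

/-- The control that steers to the state `x - removedState b w`. -/
noncomputable def reducedControl (F : ℝ → ℝ) (b : ℝ≥0) (w u x : ℝ → ℝ) (t : ℝ) : ℝ :=
  u t - w t + (b * removedState b w t + F (x t) - F (x t - removedState b w t))

variable {F : ℝ → ℝ} {b : ℝ≥0} {x₀ : ℝ} {u w x : ℝ → ℝ} {t : ℝ}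

theorem removedState_nonneg (hw : ∀ t, 0 ≤ w t) (t : ℝ) : 0 ≤ removedState b w t :=
  mul_nonneg (exp_pos _).le (intervalIntegral.integral_nonneg (le_max_right _ _)
    fun s _ ↦ mul_nonneg (exp_pos _).le (hw s))

theorem exp_mul_removedState (ht : 0 ≤ t) :
    exp (b * t) * removedState b w t = ∫ s in (0 : ℝ)..t, exp (b * s) * w s := by
  rw [removedState, max_eq_left ht, ← mul_assoc, ← exp_add, neg_mul, add_neg_cancel, exp_zero,
    one_mul]

theorem continuous_removedState (hw : ∀ s t, IntervalIntegrable w volume s t) :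
    Continuous (removedState b w) := by
  have hprim := intervalIntegral.continuous_primitive (f := fun s ↦ exp (b * s) * w s)
    (fun s t ↦ (hw s t).continuousOn_mul (by fun_prop)) 0
  exact Continuous.mul (by fun_prop) (hprim.comp (by fun_prop))

theorem removedState_eq_integral (hw : ∀ s t, IntervalIntegrable w volume s t) (ht : 0 ≤ t) :
    removedState b w t = ∫ s in (0 : ℝ)..t, (w s - b * removedState b w s) := by
  have hparts := integral_deriv_mul_add_mul_eq_sub (hasDerivAt_exp_const_mul (-b)) (by fun_prop)
    (v := fun s ↦ exp (b * s) * w s) (X := fun t ↦ ∫ s in (0 : ℝ)..max t 0, exp (b * s) * w s)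
    ((hw 0 t).continuousOn_mul (by fun_prop)) fun r hr ↦ by
      simp [max_eq_left (uIcc_of_le ht ▸ hr).1]
  simp only [max_self, intervalIntegral.integral_same, mul_zero, sub_zero] at hparts
  rw [removedState, ← hparts]
  congr with s
  have hexp : exp (-b * s) * exp (b * s) = 1 := by rw [← exp_add, neg_mul, neg_add_cancel, exp_zero]
  rw [removedState, ← mul_assoc (exp (-b * s)) (exp (b * s)), hexp]
  ring

theorem IsDissipative.sub_le_reducedControl (hF : IsDissipative F b) (hw : ∀ t, 0 ≤ w t) (t : ℝ) :
    u t - w t ≤ reducedControl F b w u x t := by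
  have h := hF.sub_le_mul_sub (sub_le_self (x t) (removedState_nonneg (b := b) hw t))
  rw [sub_sub_cancel] at h
  unfold reducedControl
  linarith

theorem IsDissipative.reducedControl_le (hF : IsDissipative F b) (hw : ∀ t, 0 ≤ w t) (t : ℝ) :
    reducedControl F b w u x t ≤ u t - w t + b * removedState b w t := by
  have h := hF.antitone (sub_le_self (x t) (removedState_nonneg (b := b) hw t))
  unfold reducedControl
  linarith

theorem IsControlPair.reduce (h : IsControlPair F x₀ u x) (hF : IsDissipative F b)
    (hwm : Measurable w) (hw0 : ∀ t, 0 ≤ w t) (hwu : ∀ t, w t < u t) :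
    IsControlPair F x₀ (reducedControl F b w u x) (x - removedState b w) := by
  have hFc := hF.lipschitz.continuous
  have hx := h.continuous
  have hw (s t : ℝ) : IntervalIntegrable w volume s t :=
    (h.intervalIntegrable s t).mono_fun hwm.aestronglyMeasurable (ae_of_all _ fun r ↦ by
      simpa only [norm_of_nonneg (hw0 r), norm_of_nonneg (h.pos r).le] using (hwu r).le)
  have hy : Continuous (removedState b w) := continuous_removedState hw
  have hcorr : Continuous fun t ↦
      b * removedState b w t + F (x t) - F (x t - removedState b w t) := by fun_prop
  refine ⟨?_, fun t ↦ ?_, fun s t ↦ ?_, hx.sub hy, fun t ht ↦ ?_⟩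
  · exact (h.measurable.sub hwm).add hcorr.measurable
  · exact (sub_pos.2 (hwu t)).trans_le (hF.sub_le_reducedControl hw0 t)
  · exact ((h.intervalIntegrable s t).sub (hw s t)).add (hcorr.intervalIntegrable s t)
  · rw [Pi.sub_apply, h.eq_add_integral t ht, removedState_eq_integral hw ht, add_sub_assoc,
      ← intervalIntegral.integral_sub (h.intervalIntegrable_rhs hFc 0 t)
        ((hw 0 t).sub (Continuous.intervalIntegrable (by fun_prop) 0 t))]
    congr with s
    rw [Pi.sub_apply, reducedControl]
    ring

end Reduction

/-- Control pairs of at most exponential growth. On this class the upper bound of the integrand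
is integrable and controls are locally bounded, which gives compactness. -/
structure IsTame (ρ c P κ : ℝ) (F : ℝ → ℝ) (x₀ : ℝ) (u x : ℝ → ℝ) : Prop
    extends IsControlPair F x₀ u x where
  objIntegrable : ObjIntegrable ρ c u x
  control_le : ∀ t, 0 ≤ t → u t ≤ P * exp (κ * t)
  state_le : ∀ t, 0 ≤ t → x t ≤ P * exp (κ * t)

section Truncation

/-- The level `A` such that truncating controls at `A e^{bt}` does not decrease the objective. -/
noncomputable def truncationLevel (ρ c K : ℝ) (b : ℝ≥0) : ℝ :=
  (ρ + 2 * b) * exp (ρ + 2 * b) / (c * stateFloor ρ c K b)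

/-- The part of the control that exceeds the truncation level. -/
noncomputable def excess (ρ c K : ℝ) (b : ℝ≥0) (u : ℝ → ℝ) (t : ℝ) : ℝ :=
  u t - min (u t) (truncationLevel ρ c K b * exp (b * t))

/-- The constant `P` for which truncated competitive pairs satisfy `IsTame`. -/
noncomputable def tameBound (ρ c K : ℝ) (b : ℝ≥0) : ℝ :=
  truncationLevel ρ c K b + b * stateBound ρ c K b + stateBound ρ c K b

variable {ρ c K : ℝ} {F : ℝ → ℝ} {b : ℝ≥0} {x₀ : ℝ} {u x : ℝ → ℝ} {t : ℝ}

theorem truncationLevel_pos (hρ : 0 < ρ) (hc : 0 < c) : 0 < truncationLevel ρ c K b :=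
  have := stateFloor_pos ρ c K b
  by unfold truncationLevel; positivity

theorem tameBound_pos (hρ : 0 < ρ) (hc : 0 < c) : 0 < tameBound ρ c K b :=
  have := truncationLevel_pos (K := K) (b := b) hρ hc
  have := stateBound_nonneg ρ c K b
  by unfold tameBound; positivity

theorem excess_nonneg (t : ℝ) : 0 ≤ excess ρ c K b u t :=
  sub_nonneg.2 (min_le_left _ _)

theorem sub_excess_le (t : ℝ) :
    u t - excess ρ c K b u t ≤ truncationLevel ρ c K b * exp (b * t) := by
  rw [excess, sub_sub_cancel]
  exact min_le_right _ _

theorem excess_lt (hρ : 0 < ρ) (hc : 0 < c) (hu : 0 < u t) : excess ρ c K b u t < u t :=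
  sub_lt_self _ (lt_min hu (mul_pos (truncationLevel_pos hρ hc) (exp_pos _)))

theorem measurable_excess (hu : Measurable u) : Measurable (excess ρ c K b u) := by
  unfold excess
  fun_prop

theorem log_le_log_sub_excess_add (hρ : 0 < ρ) (hc : 0 < c) (hu : 0 < u t) :
    log (u t) ≤ log (u t - excess ρ c K b u t) +
      excess ρ c K b u t / (truncationLevel ρ c K b * exp (b * t)) := by
  rcases le_total (u t) (truncationLevel ρ c K b * exp (b * t)) with hle | hge
  · simp [excess, min_eq_left hle]
  · rw [excess, min_eq_right hge, sub_sub_cancel]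
    exact log_le_log_add_div hu (mul_pos (truncationLevel_pos hρ hc) (exp_pos _))

variable (ρ c K F b u x) in
/-- The control of the truncated pair. -/
noncomputable def truncatedControl : ℝ → ℝ :=
  reducedControl F b (excess ρ c K b u) u x

variable (ρ c K b u x) in
/-- The state of the truncated pair. -/
noncomputable def truncatedState : ℝ → ℝ :=
  x - removedState b (excess ρ c K b u)

namespace IsCompetitive

theorem isControlPair_truncated (h : IsCompetitive ρ c K F x₀ u x) (hF : IsDissipative F b)
    (hρ : 0 < ρ) (hc : 0 < c) :
    IsControlPair F x₀ (truncatedControl ρ c K F b u x) (truncatedState ρ c K b u x) :=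
  h.reduce hF (measurable_excess h.measurable) excess_nonneg fun t ↦ excess_lt hρ hc (h.pos t)

theorem intervalIntegrable_excess (h : IsCompetitive ρ c K F x₀ u x) (hρ : 0 < ρ) (hc : 0 < c)
    (s t : ℝ) : IntervalIntegrable (excess ρ c K b u) volume s t :=
  (h.intervalIntegrable s t).mono_fun (measurable_excess h.measurable).aestronglyMeasurable
    (ae_of_all _ fun r ↦ by
      simpa only [norm_of_nonneg (excess_nonneg _), norm_of_nonneg (h.pos r).le] using
        (excess_lt hρ hc (h.pos r)).le)

theorem removedState_le (h : IsCompetitive ρ c K F x₀ u x) (hF : IsDissipative F b)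
    (hx₀ : 0 ≤ x₀) (hρ : 0 < ρ) (hc : 0 < c) (ht : 0 ≤ t) :
    removedState b (excess ρ c K b u) t ≤ x t :=
  sub_nonneg.1 ((h.isControlPair_truncated hF hρ hc).state_nonneg hF hx₀ ht)

theorem state_le_exp (h : IsCompetitive ρ c K F x₀ u x) (hF : IsDissipative F b)
    (hx₀ : 0 ≤ x₀) (hρ : 0 < ρ) (hc : 0 < c) (ht : 0 ≤ t) :
    x t ≤ stateBound ρ c K b * exp ((b + ρ) * t) := by
  refine (h.state_le hF hx₀ hρ hc ht).trans
    (mul_le_mul_of_nonneg_left (exp_le_exp.2 ?_) (stateBound_nonneg ρ c K b))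
  exact mul_le_mul_of_nonneg_right (by linarith [b.2]) ht

theorem truncatedState_le (h : IsCompetitive ρ c K F x₀ u x) (hF : IsDissipative F b)
    (hx₀ : 0 ≤ x₀) (hρ : 0 < ρ) (hc : 0 < c) (ht : 0 ≤ t) :
    truncatedState ρ c K b u x t ≤ tameBound ρ c K b * exp ((b + ρ) * t) := by
  have hA := truncationLevel_pos (K := K) (b := b) hρ hc
  have hD := stateBound_nonneg ρ c K b
  calc truncatedState ρ c K b u x t ≤ x t := sub_le_self _ (removedState_nonneg excess_nonneg t)
    _ ≤ stateBound ρ c K b * exp ((b + ρ) * t) := h.state_le_exp hF hx₀ hρ hc ht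
    _ ≤ _ := by
        unfold tameBound
        gcongr
        exact le_add_of_nonneg_left (by positivity)

theorem truncatedControl_le (h : IsCompetitive ρ c K F x₀ u x) (hF : IsDissipative F b)
    (hx₀ : 0 ≤ x₀) (hρ : 0 < ρ) (hc : 0 < c) (ht : 0 ≤ t) :
    truncatedControl ρ c K F b u x t ≤ tameBound ρ c K b * exp ((b + ρ) * t) := by
  have hA := truncationLevel_pos (K := K) (b := b) hρ hc
  calc truncatedControl ρ c K F b u x t
      ≤ u t - excess ρ c K b u t + b * removedState b (excess ρ c K b u) t :=
        hF.reducedControl_le excess_nonneg t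
    _ ≤ truncationLevel ρ c K b * exp ((b + ρ) * t) +
          b * (stateBound ρ c K b * exp ((b + ρ) * t)) := by
        gcongr
        · refine (sub_excess_le t).trans ?_
          gcongr
          exact le_add_of_nonneg_right hρ.le
        · exact (h.removedState_le hF hx₀ hρ hc ht).trans (h.state_le_exp hF hx₀ hρ hc ht)
    _ ≤ _ := by
        have := mul_nonneg (stateBound_nonneg ρ c K b) (exp_pos ((b + ρ) * t)).le
        unfold tameBound
        linarith

/-- Truncation loses at most the second term in `log` and gains at least the third one in the
cost of the state. -/
theorem integrand_le (h : IsCompetitive ρ c K F x₀ u x) (hF : IsDissipative F b)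
    (hx₀ : 0 ≤ x₀) (hρ : 0 < ρ) (hc : 0 < c) (ht : 0 ≤ t) :
    exp (-ρ * t) * (log (u t) - c * x t ^ 2) ≤
      exp (-ρ * t) *
        (log (truncatedControl ρ c K F b u x t) - c * truncatedState ρ c K b u x t ^ 2) +
      ((truncationLevel ρ c K b)⁻¹ * (exp (-(ρ + 2 * b) * t) * (exp (b * t) * excess ρ c K b u t)) -
        c * (exp (-ρ * t) * (x t * removedState b (excess ρ c K b u) t))) := by
  set y := removedState b (excess ρ c K b u) t with hy
  have hA := truncationLevel_pos (K := K) (b := b) hρ hc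
  have hlog := log_le_log_sub_excess_add (K := K) (b := b) hρ hc (h.pos t)
  have hlog' : log (u t - excess ρ c K b u t) ≤ log (truncatedControl ρ c K F b u x t) :=
    log_le_log (sub_pos.2 (excess_lt hρ hc (h.pos t)))
      (hF.sub_le_reducedControl excess_nonneg t)
  have hstate : x t * y ≤ x t ^ 2 - truncatedState ρ c K b u x t ^ 2 := by
    have hxy : 0 ≤ y * (x t - y) := mul_nonneg (removedState_nonneg excess_nonneg t)
      (sub_nonneg.2 (h.removedState_le hF hx₀ hρ hc ht))
    rw [truncatedState, Pi.sub_apply, ← hy]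
    linarith
  have hloss : exp (-ρ * t) * (excess ρ c K b u t / (truncationLevel ρ c K b * exp (b * t))) =
      (truncationLevel ρ c K b)⁻¹ *
        (exp (-(ρ + 2 * b) * t) * (exp (b * t) * excess ρ c K b u t)) := by
    have hexp : exp (-(ρ + 2 * b) * t) = exp (-ρ * t) / (exp (b * t) * exp (b * t)) := by
      rw [← exp_add, ← exp_sub]
      ring_nf
    rw [hexp]
    field_simp
  have hcost := mul_le_mul_of_nonneg_left hstate hc.le
  rw [← hloss]
  calc _ ≤ exp (-ρ * t) * (log (truncatedControl ρ c K F b u x t) +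
          excess ρ c K b u t / (truncationLevel ρ c K b * exp (b * t)) -
            (c * truncatedState ρ c K b u x t ^ 2 + c * (x t * y))) := by
        gcongr <;> linarith
    _ = _ := by ring

theorem integrableOn_gain (h : IsCompetitive ρ c K F x₀ u x) (hF : IsDissipative F b)
    (hx₀ : 0 ≤ x₀) (hρ : 0 < ρ) (hc : 0 < c) :
    IntegrableOn (fun t ↦ exp (-ρ * t) * (x t * removedState b (excess ρ c K b u) t)) (Ioi 0) := by
  have hx := h.continuous
  have hy := continuous_removedState (b := b) (h.intervalIntegrable_excess (b := b) hρ hc)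
  refine (h.integrableOn_exp_mul_sq hF hx₀ hρ hc).mono'
    (Continuous.aestronglyMeasurable (by fun_prop)) ?_
  filter_upwards [ae_restrict_mem measurableSet_Ioi] with t ht
  have hx0 := h.state_nonneg hF hx₀ (le_of_lt ht)
  have hy0 := removedState_nonneg (b := b) (w := excess ρ c K b u) excess_nonneg t
  rw [norm_of_nonneg (by positivity), sq]
  gcongr
  exact h.removedState_le hF hx₀ hρ hc (le_of_lt ht)

theorem stateFloor_mul_le_gain (h : IsCompetitive ρ c K F x₀ u x) (hF : IsDissipative F b)
    (hx₀ : 0 ≤ x₀) (hρ : 0 < ρ) (hc : 0 < c) (ht : 1 ≤ t) :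
    stateFloor ρ c K b *
        (exp (-(ρ + 2 * b) * t) * (exp (b * t) * removedState b (excess ρ c K b u) t)) ≤
      exp (-ρ * t) * (x t * removedState b (excess ρ c K b u) t) := by
  have hy0 := removedState_nonneg (b := b) (w := excess ρ c K b u) excess_nonneg t
  have hexp : exp (-ρ * t) = exp (-(ρ + 2 * b) * t) * (exp (b * t) * exp (b * t)) := by
    rw [← exp_add, ← exp_add]
    ring_nf
  calc _ ≤ exp (b * t) * x t *
          (exp (-(ρ + 2 * b) * t) * (exp (b * t) * removedState b (excess ρ c K b u) t)) := by
        gcongr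
        exact h.stateFloor_le hF hx₀ hρ hc ht
    _ = _ := by
        rw [hexp]
        ring

theorem integrableOn_removed (h : IsCompetitive ρ c K F x₀ u x) (hF : IsDissipative F b)
    (hx₀ : 0 ≤ x₀) (hρ : 0 < ρ) (hc : 0 < c) :
    IntegrableOn (fun t ↦ exp (-(ρ + 2 * b) * t) *
      (exp (b * t) * removedState b (excess ρ c K b u) t)) (Ioi 0) := by
  have hθ := stateFloor_pos ρ c K b
  have hy := continuous_removedState (b := b) (h.intervalIntegrable_excess (b := b) hρ hc)
  have hcont : Continuous fun t ↦ exp (-(ρ + 2 * b) * t) *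
      (exp (b * t) * removedState b (excess ρ c K b u) t) := by fun_prop
  rw [← Ioc_union_Ioi_eq_Ioi (zero_le_one' ℝ)]
  refine hcont.integrableOn_Ioc.union (Integrable.mono'
    (((h.integrableOn_gain hF hx₀ hρ hc).mono_set (Ioi_subset_Ioi zero_le_one)).const_mul
      (stateFloor ρ c K b)⁻¹) hcont.aestronglyMeasurable ?_)
  filter_upwards [ae_restrict_mem measurableSet_Ioi] with t ht
  have hy0 := removedState_nonneg (b := b) (w := excess ρ c K b u) excess_nonneg t
  rw [norm_of_nonneg (by positivity), le_inv_mul_iff₀ hθ]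
  exact h.stateFloor_mul_le_gain hF hx₀ hρ hc (le_of_lt ht)

theorem monotoneOn_exp_mul_removedState (h : IsCompetitive ρ c K F x₀ u x) (hρ : 0 < ρ)
    (hc : 0 < c) :
    MonotoneOn (fun t ↦ exp (b * t) * removedState b (excess ρ c K b u) t) (Ici 0) := by
  intro s hs t ht hst
  simp only [exp_mul_removedState hs, exp_mul_removedState ht]
  exact intervalIntegral.integral_mono_interval le_rfl hs hst
    (ae_of_all _ fun r ↦ mul_nonneg (exp_pos _).le (excess_nonneg r))
    ((h.intervalIntegrable_excess hρ hc 0 t).continuousOn_mul (by fun_prop))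

theorem stateFloor_mul_integral_le_gain (h : IsCompetitive ρ c K F x₀ u x)
    (hF : IsDissipative F b) (hx₀ : 0 ≤ x₀) (hρ : 0 < ρ) (hc : 0 < c) :
    stateFloor ρ c K b * (∫ t in Ioi 1, exp (-(ρ + 2 * b) * t) *
      (exp (b * t) * removedState b (excess ρ c K b u) t)) ≤
        ∫ t in Ioi 0, exp (-ρ * t) * (x t * removedState b (excess ρ c K b u) t) := by
  have hQ := h.integrableOn_removed hF hx₀ hρ hc
  have hgain := h.integrableOn_gain hF hx₀ hρ hc
  have h01 : Ioi (1 : ℝ) ⊆ Ioi 0 := Ioi_subset_Ioi zero_le_one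
  calc
    _ ≤ ∫ t in Ioi 1, exp (-ρ * t) * (x t * removedState b (excess ρ c K b u) t) := by
        rw [← integral_const_mul]
        exact setIntegral_mono_on ((hQ.mono_set h01).const_mul _) (hgain.mono_set h01)
          measurableSet_Ioi fun t ht ↦ h.stateFloor_mul_le_gain hF hx₀ hρ hc (le_of_lt ht)
    _ ≤ _ := by
        refine setIntegral_mono_set hgain ?_ h01.eventuallyLE
        filter_upwards [ae_restrict_mem measurableSet_Ioi] with t ht
        exact mul_nonneg (exp_pos _).le (mul_nonneg (h.state_nonneg hF hx₀ (le_of_lt ht))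
          (removedState_nonneg excess_nonneg t))

theorem integral_loss_le (h : IsCompetitive ρ c K F x₀ u x) (hF : IsDissipative F b)
    (hx₀ : 0 ≤ x₀) (hρ : 0 < ρ) (hc : 0 < c) {T : ℝ} (hT : 0 ≤ T) :
    ∫ t in (0 : ℝ)..T, exp (-(ρ + 2 * b) * t) * (exp (b * t) * excess ρ c K b u t) ≤
      truncationLevel ρ c K b *
        (c * ∫ t in Ioi 0, exp (-ρ * t) * (x t * removedState b (excess ρ c K b u) t)) := by
  have hβ : 0 < ρ + 2 * b := by positivity
  have hθ := stateFloor_pos ρ c K b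
  have hQ := h.integrableOn_removed hF hx₀ hρ hc
  have hloss := integral_exp_neg_mul_le_mul_integral_primitive hβ
    (fun t ↦ mul_nonneg (exp_pos (b * t)).le (excess_nonneg (ρ := ρ) (c := c) (K := K) t))
    (fun s t ↦ (h.intervalIntegrable_excess hρ hc s t).continuousOn_mul (by fun_prop))
    (fun t ht ↦ exp_mul_removedState ht) hQ hT
  have hshift := integral_Ioi_zero_exp_neg_mul_le (h.monotoneOn_exp_mul_removedState hρ hc) hQ
  have hfloor := h.stateFloor_mul_integral_le_gain hF hx₀ hρ hc
  calc _ ≤ (ρ + 2 * b) * (exp (ρ + 2 * b) * ∫ t in Ioi 1, exp (-(ρ + 2 * b) * t) *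
          (exp (b * t) * removedState b (excess ρ c K b u) t)) :=
        hloss.trans (by gcongr)
    _ = truncationLevel ρ c K b * (c * (stateFloor ρ c K b *
          ∫ t in Ioi 1, exp (-(ρ + 2 * b) * t) *
            (exp (b * t) * removedState b (excess ρ c K b u) t))) := by
        unfold truncationLevel
        field_simp
    _ ≤ _ := by
        have := truncationLevel_pos (K := K) (b := b) hρ hc
        gcongr

theorem integrableOn_loss (h : IsCompetitive ρ c K F x₀ u x) (hF : IsDissipative F b)
    (hx₀ : 0 ≤ x₀) (hρ : 0 < ρ) (hc : 0 < c) :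
    IntegrableOn (fun t ↦ exp (-(ρ + 2 * b) * t) * (exp (b * t) * excess ρ c K b u t)) (Ioi 0) :=
  integrableOn_Ioi_of_integral_le
    (fun t _ ↦ mul_nonneg (exp_pos _).le (mul_nonneg (exp_pos _).le (excess_nonneg t)))
    (fun T ↦ ((h.intervalIntegrable_excess hρ hc 0 T).continuousOn_mul
      (by fun_prop)).continuousOn_mul (by fun_prop))
    fun _ hT ↦ h.integral_loss_le hF hx₀ hρ hc hT

theorem integrableOn_loss_sub_gain (h : IsCompetitive ρ c K F x₀ u x) (hF : IsDissipative F b)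
    (hx₀ : 0 ≤ x₀) (hρ : 0 < ρ) (hc : 0 < c) :
    IntegrableOn (fun t ↦
      (truncationLevel ρ c K b)⁻¹ * (exp (-(ρ + 2 * b) * t) * (exp (b * t) * excess ρ c K b u t)) -
        c * (exp (-ρ * t) * (x t * removedState b (excess ρ c K b u) t))) (Ioi 0) :=
  ((h.integrableOn_loss hF hx₀ hρ hc).const_mul _).sub
    ((h.integrableOn_gain hF hx₀ hρ hc).const_mul _)

theorem isTame_truncated (h : IsCompetitive ρ c K F x₀ u x) (hF : IsDissipative F b)
    (hx₀ : 0 ≤ x₀) (hρ : 0 < ρ) (hc : 0 < c) :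
    IsTame ρ c (tameBound ρ c K b) (b + ρ) F x₀ (truncatedControl ρ c K F b u x)
      (truncatedState ρ c K b u x) where
  toIsControlPair := h.isControlPair_truncated hF hρ hc
  control_le _ ht := h.truncatedControl_le hF hx₀ hρ hc ht
  state_le _ ht := h.truncatedState_le hF hx₀ hρ hc ht
  objIntegrable := by
    have hpair := h.isControlPair_truncated hF hρ hc
    refine integrable_of_le_of_le (hpair.measurable_integrand ρ c).aestronglyMeasurable
      (g₂ := fun t ↦ exp (-ρ * t) * (log (tameBound ρ c K b) + (b + ρ) * t)) ?_ ?_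
      (h.objIntegrable.sub (h.integrableOn_loss_sub_gain hF hx₀ hρ hc))
      (integrableOn_exp_neg_mul_mul_add hρ _ _)
    all_goals filter_upwards [ae_restrict_mem measurableSet_Ioi] with t ht
    · exact sub_le_iff_le_add.2 (h.integrand_le hF hx₀ hρ hc (le_of_lt ht))
    · gcongr
      have hlog := log_le_log_add_of_le_mul_exp (hpair.pos t) (tameBound_pos hρ hc)
        (h.truncatedControl_le hF hx₀ hρ hc (le_of_lt ht))
      have hsq : 0 ≤ c * truncatedState ρ c K b u x t ^ 2 := by positivity
      linarith

theorem objective_le_truncated (h : IsCompetitive ρ c K F x₀ u x) (hF : IsDissipative F b)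
    (hx₀ : 0 ≤ x₀) (hρ : 0 < ρ) (hc : 0 < c) :
    objective ρ c u x ≤
      objective ρ c (truncatedControl ρ c K F b u x) (truncatedState ρ c K b u x) := by
  have hloss := h.integrableOn_loss hF hx₀ hρ hc
  have hgain := h.integrableOn_gain hF hx₀ hρ hc
  have hobj := (h.isTame_truncated hF hx₀ hρ hc).objIntegrable
  have hnet : (truncationLevel ρ c K b)⁻¹ * (∫ t in Ioi 0,
      exp (-(ρ + 2 * b) * t) * (exp (b * t) * excess ρ c K b u t)) ≤
        c * ∫ t in Ioi 0, exp (-ρ * t) * (x t * removedState b (excess ρ c K b u) t) :=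
    (inv_mul_le_iff₀ (truncationLevel_pos hρ hc)).2
      (integral_Ioi_le_of_integral_le hloss fun _ hT ↦ h.integral_loss_le hF hx₀ hρ hc hT)
  have hmono := setIntegral_mono_on h.objIntegrable
    (hobj.add (h.integrableOn_loss_sub_gain hF hx₀ hρ hc)) measurableSet_Ioi
    fun t ht ↦ h.integrand_le hF hx₀ hρ hc (le_of_lt ht)
  simp only [Pi.add_apply] at hmono
  rw [integral_add hobj (h.integrableOn_loss_sub_gain hF hx₀ hρ hc),
    integral_sub (hloss.const_mul _) (hgain.const_mul _), integral_const_mul,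
    integral_const_mul] at hmono
  unfold objective
  linarith

end IsCompetitive

end Truncation

section Compactness

theorem equicontinuous_of_dist_le {ι X α β : Type*} [TopologicalSpace X] [PseudoMetricSpace α]
    [PseudoMetricSpace β] {f : ι → X → α} {V : X → β} (hV : Continuous V)
    (h : ∀ i s t, dist (f i s) (f i t) ≤ dist (V s) (V t)) : Equicontinuous f := by
  intro s
  refine Metric.equicontinuousAt_of_continuity_modulus (fun t ↦ dist (V s) (V t)) ?_ f
    (Eventually.of_forall fun t i ↦ h i s t)
  simpa only [dist_self] using (continuous_const.dist hV).tendsto (f := fun t ↦ dist (V s) (V t)) s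

theorem exists_subseq_tendsto_of_equicontinuous {X α : Type*} [TopologicalSpace X]
    [WeaklyLocallyCompactSpace X] [SigmaCompactSpace X] [MetricSpace α] [ProperSpace α]
    {f : ℕ → X → α} (hf : Equicontinuous f)
    (hbdd : ∀ t, Bornology.IsBounded (range fun n ↦ f n t)) :
    ∃ (φ : ℕ → ℕ) (g : X → α), StrictMono φ ∧ Continuous g ∧
      ∀ t, Tendsto (fun n ↦ f (φ n) t) atTop (𝓝 (g t)) := by
  have hcl : (closure (range f)).Equicontinuous := (equicontinuous_iff_range.1 hf).closure
  let S : Set C(X, α) := {g | ⇑g ∈ closure (range f)}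
  have himage : ContinuousMap.toFun '' S = closure (range f) :=
    Subset.antisymm (image_subset_iff.2 fun g hg ↦ hg) fun g hg ↦
      ⟨⟨g, hcl.continuous ⟨g, hg⟩⟩, hg, rfl⟩
  have hpointwise : IsCompact (closure (range f)) :=
    (isCompact_univ_pi fun t ↦ (hbdd t).isCompact_closure).closure_of_subset <| by
      rintro _ ⟨n, rfl⟩ t -
      exact subset_closure (mem_range_self n)
  have hcompact : IsCompact S :=
    ArzelaAscoli.isCompact_of_equicontinuous S (himage ▸ hpointwise)
      (hcl.comp fun g : S ↦ ⟨_, g.2⟩)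
  obtain ⟨g, -, φ, hφ, hg⟩ := hcompact.tendsto_subseq
    (x := fun n ↦ (⟨f n, hf.continuous n⟩ : C(X, α))) fun n ↦ subset_closure (mem_range_self n)
  exact ⟨φ, g, hφ, g.continuous, fun t ↦ ((continuous_eval_const t).tendsto g).comp hg⟩

section Density

variable {U V : ℝ → ℝ}

theorem deriv_mem_Icc_of_monotone_sub (hU : Monotone U) (hVU : Monotone fun t ↦ V t - U t)
    {t g : ℝ} (hV : HasDerivAt V g t) : deriv U t ∈ Icc 0 g := by
  refine ⟨hU.deriv_nonneg, ?_⟩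
  by_cases hd : DifferentiableAt ℝ U t
  · rw [← sub_nonneg, ← (hV.fun_sub hd.hasDerivAt).deriv]
    exact hVU.deriv_nonneg
  · rw [deriv_zero_of_not_differentiableAt hd, ← hV.deriv]
    refine Monotone.deriv_nonneg fun s t hst ↦ ?_
    simpa using add_le_add (hU hst) (hVU hst)

theorem dist_le_dist_of_monotone_sub (hU : Monotone U) (hVU : Monotone fun t ↦ V t - U t)
    (s t : ℝ) : dist (U s) (U t) ≤ dist (V s) (V t) := by
  wlog hst : s ≤ t generalizing s t
  · rw [dist_comm, dist_comm (V s)]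
    exact this t s (le_of_not_ge hst)
  rw [dist_comm, dist_comm (V s), dist_eq, dist_eq, abs_of_nonneg (sub_nonneg.2 (hU hst))]
  refine le_trans ?_ (le_abs_self _)
  linarith [hVU hst]

theorem integral_deriv_eq_sub_of_monotone_sub (hU : Monotone U)
    (hVU : Monotone fun t ↦ V t - U t) (hV : ContDiff ℝ 1 V) (s t : ℝ) :
    ∫ r in s..t, deriv U r = U t - U s := by
  obtain ⟨K, hK⟩ := hV.contDiffOn.exists_lipschitzOnWith one_ne_zero (convex_uIcc s t)
    isCompact_uIcc
  have hlip : LipschitzOnWith K U (uIcc s t) := LipschitzOnWith.of_dist_le_mul fun p hp q hq ↦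
    (dist_le_dist_of_monotone_sub hU hVU p q).trans (hK.dist_le_mul p hp q hq)
  exact hlip.absolutelyContinuousOnInterval.integral_deriv_eq_sub

end Density

theorem monotone_primitive {v : ℝ → ℝ} (hv : ∀ s t, IntervalIntegrable v volume s t)
    (h0 : ∀ t, 0 ≤ v t) (a : ℝ) : Monotone fun t ↦ ∫ s in a..t, v s := fun s t hst ↦ by
  rw [← sub_nonneg, intervalIntegral.integral_interval_sub_left (hv a t) (hv a s)]
  exact intervalIntegral.integral_nonneg hst fun r _ ↦ h0 r

theorem intervalIntegrable_of_mem_Icc {u g : ℝ → ℝ} (hu : Measurable u) (hg : Continuous g)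
    (hug : ∀ t, u t ∈ Icc 0 (g t)) (s t : ℝ) : IntervalIntegrable u volume s t := by
  refine (hg.intervalIntegrable s t).mono_fun hu.aestronglyMeasurable (ae_of_all _ fun r ↦ ?_)
  have hur := hug r
  simpa only [norm_of_nonneg hur.1, norm_of_nonneg (hur.1.trans hur.2)] using hur.2

/-- Sequential weak compactness of the order interval `[0, g]`: the weak limit is the derivative of
the limit of the primitives. -/
theorem exists_subseq_tendsto_primitive {v : ℕ → ℝ → ℝ} {g : ℝ → ℝ} (hg : Continuous g)
    (hv : ∀ n, Measurable (v n)) (hvg : ∀ n t, v n t ∈ Icc 0 (g t)) :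
    ∃ (φ : ℕ → ℕ) (u : ℝ → ℝ), StrictMono φ ∧ Measurable u ∧ (∀ t, u t ∈ Icc 0 (g t)) ∧
      ∀ t, Tendsto (fun n ↦ ∫ s in (0 : ℝ)..t, v (φ n) s) atTop (𝓝 (∫ s in (0 : ℝ)..t, u s)) := by
  set V : ℝ → ℝ := fun t ↦ ∫ s in (0 : ℝ)..t, g s
  have hV : ∀ t, HasDerivAt V (g t) t := fun t ↦ (hg.integral_hasStrictDerivAt 0 t).hasDerivAt
  have hVc : ContDiff ℝ 1 V := contDiff_one_iff_deriv.2
    ⟨fun t ↦ (hV t).differentiableAt, by rwa [funext fun t ↦ (hV t).deriv]⟩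
  have hint := fun n ↦ intervalIntegrable_of_mem_Icc (hv n) hg (hvg n)
  have hmono : ∀ n, Monotone fun t ↦ ∫ s in (0 : ℝ)..t, v n s := fun n ↦
    monotone_primitive (hint n) (fun t ↦ (hvg n t).1) 0
  have hmono_sub : ∀ n, Monotone fun t ↦ V t - ∫ s in (0 : ℝ)..t, v n s := fun n ↦ by
    simp_rw [V, ← intervalIntegral.integral_sub (hg.intervalIntegrable 0 _) (hint n 0 _)]
    exact monotone_primitive (fun s t ↦ (hg.intervalIntegrable s t).sub (hint n s t))
      (fun t ↦ sub_nonneg.2 (hvg n t).2) 0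
  have hdist := fun n ↦ dist_le_dist_of_monotone_sub (hmono n) (hmono_sub n)
  obtain ⟨φ, U, hφ, -, hU⟩ := exists_subseq_tendsto_of_equicontinuous
    (equicontinuous_of_dist_le hVc.continuous hdist)
    fun t ↦ (Metric.isBounded_closedBall (x := 0) (r := |V t|)).subset <| by
      rintro _ ⟨n, rfl⟩
      simpa [V] using hdist n t 0
  have hUmono : Monotone U := fun s t hst ↦
    le_of_tendsto_of_tendsto' (hU s) (hU t) fun n ↦ hmono (φ n) hst
  have hVU : Monotone fun t ↦ V t - U t := fun s t hst ↦
    le_of_tendsto_of_tendsto' ((hU s).const_sub _) ((hU t).const_sub _) fun n ↦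
      hmono_sub (φ n) hst
  have hU0 : U 0 = 0 := tendsto_nhds_unique (hU 0) (by simp)
  refine ⟨φ, deriv U, hφ, measurable_deriv U,
    fun t ↦ deriv_mem_Icc_of_monotone_sub hUmono hVU (hV t), fun t ↦ ?_⟩
  rw [integral_deriv_eq_sub_of_monotone_sub hUmono hVU hVc, hU0, sub_zero]
  exact hU t

end Compactness

section WeakConvergence

variable {T C : ℝ} {h : ℝ → ℝ} {d : ℕ → ℝ → ℝ}

theorem exists_polynomial_integral_abs_sub_le (hT : 0 ≤ T) (hh : IntervalIntegrable h volume 0 T)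
    {ε : ℝ} (hε : 0 < ε) : ∃ p : Polynomial ℝ, ∫ t in (0 : ℝ)..T, |h t - p.eval t| ≤ ε := by
  obtain ⟨g, -, hhg, hgc, -⟩ := ((intervalIntegrable_iff_integrableOn_Ioc_of_le hT).1
    hh).exists_hasCompactSupport_integral_sub_le (half_pos hε)
  obtain ⟨p, hp⟩ := exists_polynomial_near_of_continuousOn 0 T g hgc.continuousOn
    (ε / (2 * (T + 1))) (by positivity)
  have hpc := p.continuous
  have hhg_int : IntervalIntegrable (fun t ↦ |h t - g t|) volume 0 T :=
    (hh.sub (hgc.intervalIntegrable _ _)).abs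
  have hgp_int : IntervalIntegrable (fun t ↦ |g t - p.eval t|) volume 0 T :=
    Continuous.intervalIntegrable (by fun_prop) _ _
  have hgp : ∫ t in (0 : ℝ)..T, |g t - p.eval t| ≤ ε / 2 := calc
    _ ≤ ∫ t in (0 : ℝ)..T, ε / (2 * (T + 1)) :=
        intervalIntegral.integral_mono_on hT hgp_int intervalIntegrable_const fun t ht ↦
          (abs_sub_comm _ _).trans_le (hp t ht).le
    _ = ε / 2 * (T / (T + 1)) := by
        rw [intervalIntegral.integral_const, smul_eq_mul, sub_zero]
        field_simp
    _ ≤ ε / 2 := mul_le_of_le_one_right (half_pos hε).le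
        ((div_le_one (by linarith)).2 (by linarith))
  refine ⟨p, ?_⟩
  calc ∫ t in (0 : ℝ)..T, |h t - p.eval t|
      ≤ ∫ t in (0 : ℝ)..T, (|h t - g t| + |g t - p.eval t|) :=
        intervalIntegral.integral_mono_on hT (hh.sub (hpc.intervalIntegrable _ _)).abs
          (hhg_int.add hgp_int) fun t _ ↦ abs_sub_le _ _ _
    _ ≤ ε / 2 + ε / 2 := by
        rw [intervalIntegral.integral_add hhg_int hgp_int]
        refine add_le_add ?_ hgp
        rw [intervalIntegral.integral_of_le hT]
        exact hhg
    _ = ε := add_halves ε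

theorem tendsto_integral_mul_zero_of_hasDerivAt {a a' : ℝ → ℝ} (ha : ∀ t, HasDerivAt a (a' t) t)
    (ha' : Continuous a') (hT : 0 ≤ T) (hd : ∀ n, IntervalIntegrable (d n) volume 0 T)
    (hC : ∀ n, ∀ t ∈ Icc 0 T, |d n t| ≤ C)
    (hlim : ∀ t ∈ Icc 0 T, Tendsto (fun n ↦ ∫ s in (0 : ℝ)..t, d n s) atTop (𝓝 0)) :
    Tendsto (fun n ↦ ∫ t in (0 : ℝ)..T, a t * d n t) atTop (𝓝 0) := by
  have hac : Continuous a := continuous_iff_continuousAt.2 fun t ↦ (ha t).continuousAt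
  have hprim : ∀ n, ContinuousOn (fun t ↦ ∫ s in (0 : ℝ)..t, d n s) (uIcc 0 T) := fun n ↦
    intervalIntegral.continuousOn_primitive_interval' (hd n) left_mem_uIcc
  have hparts : ∀ n, ∫ t in (0 : ℝ)..T, a t * d n t = a T * (∫ s in (0 : ℝ)..T, d n s) -
      ∫ t in (0 : ℝ)..T, a' t * ∫ s in (0 : ℝ)..t, d n s := fun n ↦ by
    have h := integral_deriv_mul_add_mul_eq_sub ha ha' (hd n)
      (X := fun t ↦ ∫ s in (0 : ℝ)..t, d n s) fun t _ ↦ by simp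
    have hprim_int : IntervalIntegrable (fun t ↦ a' t * ∫ s in (0 : ℝ)..t, d n s) volume 0 T :=
      (ha'.continuousOn.mul (hprim n)).intervalIntegrable
    rw [intervalIntegral.integral_add hprim_int ((hd n).continuousOn_mul hac.continuousOn),
      intervalIntegral.integral_same] at h
    linarith
  have hbound : ∀ n, ∀ t ∈ uIoc 0 T, ‖a' t * ∫ s in (0 : ℝ)..t, d n s‖ ≤ |a' t| * (C * T) := by
    intro n t ht
    rw [uIoc_of_le hT] at ht
    have h := intervalIntegral.norm_integral_le_of_norm_le_const (C := C) (f := d n) (a := 0)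
      (b := t) fun s hs ↦ by
        rw [uIoc_of_le ht.1.le] at hs
        exact hC n s ⟨hs.1.le, hs.2.trans ht.2⟩
    rw [sub_zero, abs_of_pos ht.1] at h
    have hC0 : 0 ≤ C := (abs_nonneg _).trans (hC n 0 (left_mem_Icc.2 hT))
    rw [norm_mul, norm_eq_abs]
    exact mul_le_mul_of_nonneg_left (h.trans (mul_le_mul_of_nonneg_left ht.2 hC0)) (abs_nonneg _)
  have hrem : Tendsto (fun n ↦ ∫ t in (0 : ℝ)..T, a' t * ∫ s in (0 : ℝ)..t, d n s) atTop
      (𝓝 (∫ t in (0 : ℝ)..T, a' t * 0)) :=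
    intervalIntegral.tendsto_integral_filter_of_dominated_convergence _
      (Eventually.of_forall fun n ↦ (ha'.continuousOn.mul
        ((hprim n).mono uIoc_subset_uIcc)).aestronglyMeasurable measurableSet_uIoc)
      (Eventually.of_forall fun n ↦ ae_of_all _ (hbound n))
      (Continuous.intervalIntegrable (by fun_prop) _ _)
      (ae_of_all _ fun t ht ↦ (hlim t (uIcc_of_le hT ▸ uIoc_subset_uIcc ht)).const_mul _)
  simpa [hparts] using ((hlim T (right_mem_Icc.2 hT)).const_mul (a T)).sub hrem

theorem abs_integral_mul_sub_integral_mul_le {g d : ℝ → ℝ} (hT : 0 ≤ T)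
    (hd : IntervalIntegrable d volume 0 T) (hC : ∀ t ∈ Icc 0 T, |d t| ≤ C)
    (hh : IntervalIntegrable h volume 0 T) (hg : IntervalIntegrable g volume 0 T) :
    |(∫ t in (0 : ℝ)..T, h t * d t) - ∫ t in (0 : ℝ)..T, g t * d t| ≤
      C * ∫ t in (0 : ℝ)..T, |h t - g t| := by
  have hmul : ∀ {k : ℝ → ℝ}, IntervalIntegrable k volume 0 T →
      IntervalIntegrable (fun t ↦ k t * d t) volume 0 T := fun hk ↦ by
    rw [intervalIntegrable_iff_integrableOn_Ioc_of_le hT] at hk hd ⊢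
    exact hk.mul_bdd hd.aestronglyMeasurable (ae_restrict_of_forall_mem measurableSet_Ioc
      fun t ht ↦ hC t (Ioc_subset_Icc_self ht))
  rw [← intervalIntegral.integral_sub (hmul hh) (hmul hg), ← norm_eq_abs,
    ← intervalIntegral.integral_const_mul]
  refine intervalIntegral.norm_integral_le_of_norm_le hT (ae_of_all _ fun t ht ↦ ?_)
    ((hh.sub hg).abs.const_mul C)
  rw [← sub_mul, norm_mul, mul_comm]
  exact mul_le_mul_of_nonneg_right (hC t (Ioc_subset_Icc_self ht)) (abs_nonneg _)

theorem tendsto_integral_mul_zero (hT : 0 ≤ T) (hd : ∀ n, IntervalIntegrable (d n) volume 0 T)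
    (hC : ∀ n, ∀ t ∈ Icc 0 T, |d n t| ≤ C)
    (hlim : ∀ t ∈ Icc 0 T, Tendsto (fun n ↦ ∫ s in (0 : ℝ)..t, d n s) atTop (𝓝 0))
    (hh : IntervalIntegrable h volume 0 T) :
    Tendsto (fun n ↦ ∫ t in (0 : ℝ)..T, h t * d n t) atTop (𝓝 0) := by
  have hC0 : 0 ≤ C := (abs_nonneg _).trans (hC 0 0 (left_mem_Icc.2 hT))
  refine Metric.tendsto_nhds.2 fun ε hε ↦ ?_
  obtain ⟨p, hp⟩ := exists_polynomial_integral_abs_sub_le hT hh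
    (ε := ε / (2 * (C + 1))) (by positivity)
  have hpd := tendsto_integral_mul_zero_of_hasDerivAt p.hasDerivAt p.derivative.continuous hT hd
    hC hlim
  filter_upwards [Metric.tendsto_nhds.1 hpd (ε / 2) (half_pos hε)] with n hn
  have hdiff := calc
    |(∫ t in (0 : ℝ)..T, h t * d n t) - ∫ t in (0 : ℝ)..T, p.eval t * d n t|
      ≤ C * ∫ t in (0 : ℝ)..T, |h t - p.eval t| :=
        abs_integral_mul_sub_integral_mul_le hT (hd n) (hC n) hh
          (p.continuous.intervalIntegrable 0 T)
    _ ≤ C * (ε / (2 * (C + 1))) := mul_le_mul_of_nonneg_left hp hC0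
    _ = ε / 2 * (C / (C + 1)) := by field_simp
    _ ≤ ε / 2 := mul_le_of_le_one_right (half_pos hε).le
        ((div_le_one (by linarith)).2 (by linarith))
  calc dist (∫ t in (0 : ℝ)..T, h t * d n t) 0
      ≤ dist (∫ t in (0 : ℝ)..T, h t * d n t) (∫ t in (0 : ℝ)..T, p.eval t * d n t) +
        dist (∫ t in (0 : ℝ)..T, p.eval t * d n t) 0 := dist_triangle _ _ _
    _ < ε / 2 + ε / 2 := add_lt_add_of_le_of_lt hdiff hn
    _ = ε := add_halves ε

end WeakConvergence

/-- Convergence of a sequence of control-state pairs with control and state bounded by `P e^{κt}`: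
the states converge pointwise on `[0, ∞)`, the controls weakly, that is, their primitives converge
pointwise. -/
structure IsWeakLimit (P κ : ℝ) (un xn : ℕ → ℝ → ℝ) (u x : ℝ → ℝ) : Prop where
  measurable : Measurable u
  control_mem : ∀ t, u t ∈ Icc 0 (P * exp (κ * t))
  continuous : Continuous x
  tendsto_state : ∀ t, 0 ≤ t → Tendsto (fun n ↦ xn n t) atTop (𝓝 (x t))
  tendsto_integral_control : ∀ t, 0 ≤ t →
    Tendsto (fun n ↦ ∫ s in (0 : ℝ)..t, un n s) atTop (𝓝 (∫ s in (0 : ℝ)..t, u s))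

section WeakLimit

variable {ρ c P κ x₀ : ℝ} {F : ℝ → ℝ} {b : ℝ≥0} {s t : ℝ}

namespace IsTame

variable {u x : ℝ → ℝ}

theorem abs_rhs_le (h : IsTame ρ c P κ F x₀ u x) (hF : IsDissipative F b) (hx₀ : 0 ≤ x₀)
    (ht : 0 ≤ t) : |F (x t) + u t| ≤ (b + 1) * (P * exp (κ * t)) := by
  have hx := h.state_nonneg hF hx₀ ht
  have hbx : b * x t ≤ b * (P * exp (κ * t)) :=
    mul_le_mul_of_nonneg_left (h.state_le t ht) b.coe_nonneg
  rw [abs_le]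
  constructor <;>
    linarith [hF.nonpos hx, hF.neg_mul_le hx, h.pos t, h.control_le t ht, h.state_le t ht]

theorem dist_state_le (h : IsTame ρ c P κ F x₀ u x) (hF : IsDissipative F b) (hx₀ : 0 ≤ x₀)
    (hs : 0 ≤ s) (ht : 0 ≤ t) :
    dist (x s) (x t) ≤ dist (∫ r in (0 : ℝ)..s, (b + 1) * (P * exp (κ * r)))
      (∫ r in (0 : ℝ)..t, (b + 1) * (P * exp (κ * r))) := by
  have hint : ∀ p q, IntervalIntegrable (fun r ↦ (b + 1) * (P * exp (κ * r))) volume p q :=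
    fun _ _ ↦ Continuous.intervalIntegrable (by fun_prop) _ _
  rw [dist_comm, dist_eq, h.eq_add_integral_of_le hF.lipschitz.continuous hs ht,
    add_sub_cancel_left, dist_comm, dist_eq,
    intervalIntegral.integral_interval_sub_left (hint 0 t) (hint 0 s), ← norm_eq_abs]
  refine intervalIntegral.norm_integral_le_abs_of_norm_le
    (ae_restrict_of_forall_mem measurableSet_uIoc fun r hr ↦ ?_) (hint s t)
  exact h.abs_rhs_le hF hx₀ ((le_min hs ht).trans hr.1.le)

theorem indicator_control_mem (h : IsTame ρ c P κ F x₀ u x) (t : ℝ) :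
    (Ici 0).indicator u t ∈ Icc 0 (P * exp (κ * t)) := by
  have hP : 0 ≤ P := by simpa using (h.pos 0).le.trans (h.control_le 0 le_rfl)
  rcases le_or_gt 0 t with ht | ht
  · rw [indicator_of_mem (mem_Ici.2 ht)]
    exact ⟨(h.pos t).le, h.control_le t ht⟩
  · rw [indicator_of_notMem (notMem_Ici.2 ht)]
    exact ⟨le_rfl, mul_nonneg hP (exp_pos _).le⟩

end IsTame

theorem exists_subseq_isWeakLimit {un xn : ℕ → ℝ → ℝ} (hF : IsDissipative F b) (hx₀ : 0 ≤ x₀)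
    (h : ∀ n, IsTame ρ c P κ F x₀ (un n) (xn n)) :
    ∃ (φ : ℕ → ℕ) (u x : ℝ → ℝ), StrictMono φ ∧ IsWeakLimit P κ (un ∘ φ) (xn ∘ φ) u x := by
  have hrate : Continuous fun r ↦ (b + 1) * (P * exp (κ * r)) := by fun_prop
  have hV : Continuous fun t : ℝ ↦ ∫ r in (0 : ℝ)..max t 0, (b + 1) * (P * exp (κ * r)) :=
    (intervalIntegral.continuous_primitive (fun _ _ ↦ hrate.intervalIntegrable _ _) 0).comp
      (continuous_id.max continuous_const)
  obtain ⟨φ, x, hφ, hx, hxlim⟩ := exists_subseq_tendsto_of_equicontinuous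
    (f := fun n t ↦ xn n (max t 0)) (equicontinuous_of_dist_le hV fun n s t ↦
      (h n).dist_state_le hF hx₀ (le_max_right s 0) (le_max_right t 0))
    fun t ↦ (Metric.isBounded_Icc 0 (P * exp (κ * max t 0))).subset <| by
      rintro _ ⟨n, rfl⟩
      exact ⟨(h n).state_nonneg hF hx₀ (le_max_right t 0), (h n).state_le _ (le_max_right t 0)⟩
  obtain ⟨ψ, u, hψ, hu, hu_mem, hulim⟩ := exists_subseq_tendsto_primitive
    (v := fun n ↦ (Ici 0).indicator (un (φ n))) (g := fun t ↦ P * exp (κ * t)) (by fun_prop)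
    (fun n ↦ (h (φ n)).measurable.indicator measurableSet_Ici)
    fun n ↦ (h (φ n)).indicator_control_mem
  refine ⟨φ ∘ ψ, u, x, hφ.comp hψ, hu, hu_mem, hx, fun t ht ↦ ?_, fun t ht ↦ ?_⟩
  · simpa only [max_eq_left ht, Function.comp_def] using (hxlim t).comp hψ.tendsto_atTop
  · refine (hulim t).congr fun n ↦ intervalIntegral.integral_congr fun s hs ↦ ?_
    exact indicator_of_mem (uIcc_of_le ht ▸ hs).1 _

namespace IsWeakLimit

variable {un xn : ℕ → ℝ → ℝ} {u x : ℝ → ℝ}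

theorem intervalIntegrable (h : IsWeakLimit P κ un xn u x) (s t : ℝ) :
    IntervalIntegrable u volume s t :=
  intervalIntegrable_of_mem_Icc h.measurable (by fun_prop) h.control_mem s t

theorem eq_add_integral (h : IsWeakLimit P κ un xn u x) (hF : IsDissipative F b) (hx₀ : 0 ≤ x₀)
    (hn : ∀ n, IsTame ρ c P κ F x₀ (un n) (xn n)) (ht : 0 ≤ t) :
    x t = x₀ + ∫ s in (0 : ℝ)..t, (F (x s) + u s) := by
  have hFc := hF.lipschitz.continuous
  have hFx : ∀ {y : ℝ → ℝ}, Continuous y → IntervalIntegrable (fun s ↦ F (y s)) volume 0 t :=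
    fun hy ↦ (hFc.comp hy).intervalIntegrable 0 t
  have hbound : ∀ n, ∀ s ∈ uIoc 0 t, ‖F (xn n s)‖ ≤ b * (P * exp (κ * s)) := fun n s hs ↦ by
    have hs0 : 0 ≤ s := (uIoc_of_le ht ▸ hs).1.le
    have hxs := (hn n).state_nonneg hF hx₀ hs0
    rw [norm_of_nonpos (hF.nonpos hxs)]
    exact (neg_le.1 (hF.neg_mul_le hxs)).trans
      (mul_le_mul_of_nonneg_left ((hn n).state_le s hs0) b.coe_nonneg)
  have hdrift : Tendsto (fun n ↦ ∫ s in (0 : ℝ)..t, F (xn n s)) atTop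
      (𝓝 (∫ s in (0 : ℝ)..t, F (x s))) :=
    intervalIntegral.tendsto_integral_filter_of_dominated_convergence _
      (Eventually.of_forall fun n ↦ (hFc.comp (hn n).continuous).aestronglyMeasurable)
      (Eventually.of_forall fun n ↦ ae_of_all _ (hbound n))
      (Continuous.intervalIntegrable (by fun_prop) _ _)
      (ae_of_all _ fun s hs ↦ (hFc.tendsto _).comp
        (h.tendsto_state s (uIoc_of_le ht ▸ hs).1.le))
  refine tendsto_nhds_unique (h.tendsto_state t ht) ?_
  rw [intervalIntegral.integral_add (hFx h.continuous) (h.intervalIntegrable 0 t)]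
  refine ((hdrift.add (h.tendsto_integral_control t ht)).const_add x₀).congr fun n ↦ ?_
  rw [← intervalIntegral.integral_add (hFx (hn n).continuous) ((hn n).intervalIntegrable 0 t),
    ← (hn n).eq_add_integral t ht]

end IsWeakLimit

end WeakLimit

section Fatou

variable {α : Type*} {m : MeasurableSpace α} {μ : Measure α} {C : ℝ}

theorem eLpNorm_one_le_of_integral_le {f : α → ℝ} (hf : Integrable f μ) (hf0 : 0 ≤ᵐ[μ] f)
    (hC : ∫ a, f a ∂μ ≤ C) : eLpNorm f 1 μ ≤ C.toNNReal := by
  rw [eLpNorm_one_eq_lintegral_enorm, ← ofReal_integral_norm_eq_lintegral_enorm hf,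
    integral_congr_ae (hf0.mono fun a ha ↦ norm_of_nonneg ha)]
  exact ENNReal.ofReal_le_ofReal hC

variable {f : ℕ → α → ℝ}

theorem ae_not_tendsto_atTop (hf : ∀ n, Measurable (f n)) (hint : ∀ n, Integrable (f n) μ)
    (hf0 : ∀ n, 0 ≤ᵐ[μ] f n) (hC : ∀ n, ∫ a, f n a ∂μ ≤ C) :
    ∀ᵐ a ∂μ, ¬ Tendsto (fun n ↦ f n a) atTop atTop := by
  filter_upwards [ae_bdd_liminf_atTop_of_eLpNorm_bdd one_ne_zero hf fun n ↦
    eLpNorm_one_le_of_integral_le (hint n) (hf0 n) (hC n)] with a ha hlim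
  refine ha.ne (Tendsto.liminf_eq ?_)
  simp only [← ofReal_norm]
  exact ENNReal.tendsto_ofReal_atTop.comp (tendsto_norm_atTop_atTop.comp hlim)

theorem integrable_and_integral_le_of_tendsto_ae {g : α → ℝ} (hint : ∀ n, Integrable (f n) μ)
    (hf0 : ∀ n, 0 ≤ᵐ[μ] f n) (hC : ∀ n, ∫ a, f n a ∂μ ≤ C)
    (hlim : ∀ᵐ a ∂μ, Tendsto (fun n ↦ f n a) atTop (𝓝 (g a))) :
    Integrable g μ ∧ ∫ a, g a ∂μ ≤ C := by
  have hnorm : eLpNorm g 1 μ ≤ C.toNNReal :=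
    (Lp.eLpNorm_lim_le_liminf_eLpNorm (fun n ↦ (hint n).aestronglyMeasurable) g hlim).trans <|
      liminf_le_of_le (by isBoundedDefault) fun b hb ↦ by
        obtain ⟨n, hn⟩ := hb.exists
        exact hn.trans (eLpNorm_one_le_of_integral_le (hint n) (hf0 n) (hC n))
  have hg : Integrable g μ := memLp_one_iff_integrable.1
    ⟨aestronglyMeasurable_of_tendsto_ae _ (fun n ↦ (hint n).aestronglyMeasurable) hlim,
      hnorm.trans_lt ENNReal.coe_lt_top⟩
  refine ⟨hg, ?_⟩
  rw [eLpNorm_one_eq_lintegral_enorm, ← ofReal_integral_norm_eq_lintegral_enorm hg] at hnorm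
  exact (integral_mono hg hg.norm fun a ↦ le_norm_self (g a)).trans
    ((ENNReal.ofReal_le_ofReal_iff ((integral_nonneg_of_ae (hf0 0)).trans (hC 0))).1 hnorm)

end Fatou

/-- The amount by which the integrand of the objective falls short of
`e^{-ρt} (log (P + 1) + κ t)`. It is nonnegative as long as the control is at most
`P e^{κt} + 1`; the additional `1` leaves room for shifting a control bounded by `P e^{κt}`. -/
noncomputable def deficit (ρ c P κ : ℝ) (u x : ℝ → ℝ) (t : ℝ) : ℝ :=
  exp (-ρ * t) * (log (P + 1) + κ * t - log (u t) + c * x t ^ 2)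

/-- The value `∫₀^∞ e^{-ρt} (log (P + 1) + κ t) dt`, which no objective exceeds if the control is
bounded by `P e^{κt}`. -/
noncomputable def objectiveBound (ρ P κ : ℝ) : ℝ :=
  ∫ t in Ioi 0, exp (-ρ * t) * (log (P + 1) + κ * t)

section Deficit

variable {ρ c P κ ε M x₀ : ℝ} {F : ℝ → ℝ} {b : ℝ≥0} {u v x y : ℝ → ℝ} {t T : ℝ}

theorem deficit_nonneg (hc : 0 ≤ c) (hP : 0 ≤ P) (hκ : 0 ≤ κ) (ht : 0 ≤ t) (hu : 0 < u t)
    (hle : u t ≤ P * exp (κ * t) + 1) : 0 ≤ deficit ρ c P κ u x t := by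
  have hexp : 1 ≤ exp (κ * t) := one_le_exp (mul_nonneg hκ ht)
  have hlog := log_le_log_add_of_le_mul_exp (P := P + 1) (a := κ * t) hu (by linarith)
    (by linarith)
  have hsq : 0 ≤ c * x t ^ 2 := by positivity
  exact mul_nonneg (exp_pos _).le (by linarith)

theorem deficit_le_deficit (hc : 0 ≤ c) (hxy : |x t| ≤ |y t|) :
    deficit ρ c P κ u x t ≤ deficit ρ c P κ u y t := by
  have hsq := sq_le_sq.2 hxy
  unfold deficit
  gcongr

theorem deficit_eq_sub (u x : ℝ → ℝ) (t : ℝ) : deficit ρ c P κ u x t =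
    exp (-ρ * t) * (log (P + 1) + κ * t) - exp (-ρ * t) * (log (u t) - c * x t ^ 2) := by
  unfold deficit
  ring

theorem integrableOn_deficit_iff (hρ : 0 < ρ) :
    IntegrableOn (deficit ρ c P κ u x) (Ioi 0) ↔ ObjIntegrable ρ c u x := by
  have hlin := integrableOn_exp_neg_mul_mul_add hρ (log (P + 1)) κ
  simp only [funext (deficit_eq_sub u x)]
  refine ⟨fun h ↦ (hlin.sub h).congr (ae_of_all _ fun t ↦ ?_), hlin.sub⟩
  exact sub_sub_cancel _ _

theorem integral_deficit (hρ : 0 < ρ) (h : ObjIntegrable ρ c u x) :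
    ∫ t in Ioi 0, deficit ρ c P κ u x t = objectiveBound ρ P κ - objective ρ c u x := by
  simp only [funext (deficit_eq_sub u x)]
  exact integral_sub (integrableOn_exp_neg_mul_mul_add hρ _ κ) h

theorem deficit_add_sub_le_deficit (hu : 0 ≤ u t) (hv : 0 < v t) (hε : 0 < ε) :
    deficit ρ c P κ (fun t ↦ u t + ε) x t - exp (-ρ * t) / (u t + ε) * (v t - u t) ≤
      deficit ρ c P κ v x t := by
  have hlog := log_le_log_add_div hv (add_pos_of_nonneg_of_pos hu hε)
  have hdiv : (v t - (u t + ε)) / (u t + ε) ≤ (v t - u t) / (u t + ε) := by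
    gcongr
    linarith
  have h := mul_le_mul_of_nonneg_left (hlog.trans (add_le_add_right hdiv _)) (exp_pos (-ρ * t)).le
  rw [div_mul_eq_mul_div, ← mul_div_assoc']
  unfold deficit
  linarith

theorem tendsto_deficit_add (ht : 0 < u t) :
    Tendsto (fun n : ℕ ↦ deficit ρ c P κ (fun t ↦ u t + 1 / (n + 1)) x t) atTop
      (𝓝 (deficit ρ c P κ u x t)) := by
  have hlog : Tendsto (fun n : ℕ ↦ log (u t + 1 / (n + 1))) atTop (𝓝 (log (u t))) := by
    simpa only [add_zero] using (tendsto_one_div_add_atTop_nhds_zero_nat.const_add (u t)).log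
      (by simpa only [add_zero] using ht.ne')
  exact ((hlog.const_sub _).add_const _).const_mul _

theorem tendsto_deficit_add_atTop (ht : u t = 0) :
    Tendsto (fun n : ℕ ↦ deficit ρ c P κ (fun t ↦ u t + 1 / (n + 1)) x t) atTop atTop := by
  have hlog : Tendsto (fun n : ℕ ↦ log (u t + 1 / (n + 1))) atTop atBot := by
    simp only [ht, zero_add]
    exact tendsto_log_nhdsGT_zero.comp (tendsto_nhdsWithin_iff.2
      ⟨tendsto_one_div_add_atTop_nhds_zero_nat,
        Eventually.of_forall fun n ↦ mem_Ioi.2 Nat.one_div_pos_of_nat⟩)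
  refine (tendsto_atTop_add_const_right _ _ ?_).const_mul_atTop (exp_pos _)
  simp only [sub_eq_add_neg]
  exact tendsto_atTop_add_const_left _ _ (tendsto_neg_atBot_atTop.comp hlog)

namespace IsTame

theorem bound_pos (h : IsTame ρ c P κ F x₀ u x) : 0 < P := by
  simpa using (h.pos 0).trans_le (h.control_le 0 le_rfl)

theorem deficit_nonneg (h : IsTame ρ c P κ F x₀ u x) (hc : 0 ≤ c) (hκ : 0 ≤ κ) (ht : 0 ≤ t) :
    0 ≤ deficit ρ c P κ u x t :=
  _root_.deficit_nonneg hc h.bound_pos.le hκ ht (h.pos t)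
    ((h.control_le t ht).trans (le_add_of_nonneg_right zero_le_one))

theorem objective_le (h : IsTame ρ c P κ F x₀ u x) (hρ : 0 < ρ) (hc : 0 ≤ c) (hκ : 0 ≤ κ) :
    objective ρ c u x ≤ objectiveBound ρ P κ := by
  have hnonneg := setIntegral_nonneg (μ := volume) measurableSet_Ioi fun t (ht : 0 < t) ↦
    h.deficit_nonneg hc hκ ht.le
  rwa [integral_deficit hρ h.objIntegrable, sub_nonneg] at hnonneg

theorem intervalIntegrable_deficit (h : IsTame ρ c P κ F x₀ u x) (hρ : 0 < ρ) (hT : 0 ≤ T) :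
    IntervalIntegrable (deficit ρ c P κ u x) volume 0 T :=
  (intervalIntegrable_iff_integrableOn_Ioc_of_le hT).2
    (((integrableOn_deficit_iff hρ).2 h.objIntegrable).mono_set Ioc_subset_Ioi_self)

theorem integral_deficit_le (h : IsTame ρ c P κ F x₀ u x) (hρ : 0 < ρ) (hc : 0 ≤ c)
    (hκ : 0 ≤ κ) (hT : 0 ≤ T) :
    ∫ t in (0 : ℝ)..T, deficit ρ c P κ u x t ≤ objectiveBound ρ P κ - objective ρ c u x := by
  rw [← integral_deficit hρ h.objIntegrable, intervalIntegral.integral_of_le hT]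
  exact setIntegral_mono_set ((integrableOn_deficit_iff hρ).2 h.objIntegrable)
    (ae_restrict_of_forall_mem measurableSet_Ioi fun t ht ↦ h.deficit_nonneg hc hκ (le_of_lt ht))
    Ioc_subset_Ioi_self.eventuallyLE

end IsTame

namespace IsWeakLimit

variable {un xn : ℕ → ℝ → ℝ}

theorem add_pos (h : IsWeakLimit P κ un xn u x) (hε : 0 < ε) (t : ℝ) : 0 < u t + ε :=
  add_pos_of_nonneg_of_pos (h.control_mem t).1 hε

theorem bound_nonneg (h : IsWeakLimit P κ un xn u x) : 0 ≤ P := by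
  simpa using (h.control_mem 0).1.trans (h.control_mem 0).2

theorem measurable_deficit (h : IsWeakLimit P κ un xn u x) (ρ c ε : ℝ) :
    Measurable (deficit ρ c P κ (fun t ↦ u t + ε) x) := by
  have hu := h.measurable
  have hx := h.continuous.measurable
  unfold deficit
  fun_prop

theorem intervalIntegrable_deficit (h : IsWeakLimit P κ un xn u x) (hε : 0 < ε)
    (hy : Continuous y) (ρ c s t : ℝ) :
    IntervalIntegrable (deficit ρ c P κ (fun t ↦ u t + ε) y) volume s t := by
  have hbound : ∀ r, 0 < P * exp (κ * r) + ε := fun r ↦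
    (h.add_pos hε r).trans_le (add_le_add_left (h.control_mem r).2 ε)
  have hlog : IntervalIntegrable (fun r ↦ log (u r + ε) - log ε) volume s t :=
    intervalIntegrable_of_mem_Icc (g := fun r ↦ log (P * exp (κ * r) + ε) - log ε)
      ((h.measurable.add_const ε).log.sub_const _)
      ((Continuous.log (by fun_prop) fun r ↦ (hbound r).ne').sub continuous_const)
      (fun r ↦ ⟨sub_nonneg.2 (log_le_log hε (le_add_of_nonneg_left (h.control_mem r).1)),
        sub_le_sub_right (log_le_log (h.add_pos hε r)
          (add_le_add_left (h.control_mem r).2 ε)) _⟩) s t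
  have hrest : IntervalIntegrable (fun r ↦ log (P + 1) + κ * r + c * y r ^ 2 - log ε)
      volume s t := Continuous.intervalIntegrable (by fun_prop) _ _
  refine ((hrest.sub hlog).continuousOn_mul (g := fun r ↦ exp (-ρ * r))
    (by fun_prop)).congr fun r _ ↦ ?_
  simp only [deficit]
  ring

theorem tendsto_integral_deficit (h : IsWeakLimit P κ un xn u x)
    (hn : ∀ n, IsTame ρ c P κ F x₀ (un n) (xn n)) (hF : IsDissipative F b) (hx₀ : 0 ≤ x₀)
    (hc : 0 ≤ c) (hκ : 0 ≤ κ) (hε : 0 < ε) (hε1 : ε ≤ 1) (hT : 0 ≤ T) :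
    Tendsto (fun n ↦ ∫ t in (0 : ℝ)..T, deficit ρ c P κ (fun t ↦ u t + ε) (xn n) t) atTop
      (𝓝 (∫ t in (0 : ℝ)..T, deficit ρ c P κ (fun t ↦ u t + ε) x t)) := by
  refine intervalIntegral.tendsto_integral_filter_of_dominated_convergence
    (deficit ρ c P κ (fun t ↦ u t + ε) fun t ↦ P * exp (κ * t))
    (Eventually.of_forall fun n ↦
      (h.intervalIntegrable_deficit hε (hn n).continuous ρ c 0 T).def'.aestronglyMeasurable)
    (Eventually.of_forall fun n ↦ ae_of_all _ fun t ht ↦ ?_)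
    (h.intervalIntegrable_deficit hε (by fun_prop) ρ c 0 T) (ae_of_all _ fun t ht ↦ ?_)
  all_goals have ht0 : 0 ≤ t := (uIoc_of_le hT ▸ ht).1.le
  · rw [norm_of_nonneg (_root_.deficit_nonneg (u := fun t ↦ u t + ε) hc (hn n).bound_pos.le hκ
      ht0 (h.add_pos hε t) (add_le_add (h.control_mem t).2 hε1))]
    exact deficit_le_deficit hc (abs_le_abs_of_nonneg ((hn n).state_nonneg hF hx₀ ht0)
      ((hn n).state_le t ht0))
  · exact (((h.tendsto_state t ht0).pow 2).const_mul c).const_add _ |>.const_mul _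

theorem tendsto_integral_mul_sub (h : IsWeakLimit P κ un xn u x)
    (hn : ∀ n, IsTame ρ c P κ F x₀ (un n) (xn n)) (hκ : 0 ≤ κ) (hT : 0 ≤ T) {w : ℝ → ℝ}
    (hw : IntervalIntegrable w volume 0 T) :
    Tendsto (fun n ↦ ∫ t in (0 : ℝ)..T, w t * (un n t - u t)) atTop (𝓝 0) := by
  refine tendsto_integral_mul_zero (C := P * exp (κ * T)) hT
    (fun n ↦ ((hn n).intervalIntegrable 0 T).sub (h.intervalIntegrable 0 T)) (fun n t ht ↦ ?_)
    (fun t ht ↦ ?_) hw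
  · have hmono : P * exp (κ * t) ≤ P * exp (κ * T) :=
      mul_le_mul_of_nonneg_left (exp_le_exp.2 (mul_le_mul_of_nonneg_left ht.2 hκ))
        (hn 0).bound_pos.le
    exact (abs_sub_le_of_nonneg_of_le ((hn n).pos t).le ((hn n).control_le t ht.1)
      (h.control_mem t).1 (h.control_mem t).2).trans hmono
  · simp only [intervalIntegral.integral_sub ((hn _).intervalIntegrable 0 t)
      (h.intervalIntegrable 0 t)]
    exact tendsto_sub_nhds_zero_iff.2 (h.tendsto_integral_control t ht.1)

theorem intervalIntegrable_exp_div_mul (h : IsWeakLimit P κ un xn u x) (hε : 0 < ε) (ρ : ℝ)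
    {s t : ℝ} (hv : IntervalIntegrable v volume s t) :
    IntervalIntegrable (fun r ↦ exp (-ρ * r) / (u r + ε) * v r) volume s t := by
  have hinv : IntervalIntegrable (fun r ↦ (u r + ε)⁻¹ * v r) volume s t :=
    intervalIntegrable_iff.2 (hv.def'.bdd_mul (c := ε⁻¹)
      (h.measurable.add_const ε).inv.aestronglyMeasurable (ae_of_all _ fun r ↦ by
        rw [norm_of_nonneg (inv_pos.2 (h.add_pos hε r)).le]
        exact inv_anti₀ hε (le_add_of_nonneg_left (h.control_mem r).1)))
  simpa only [div_eq_mul_inv, mul_assoc] using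
    hinv.continuousOn_mul (g := fun r ↦ exp (-ρ * r)) (by fun_prop)

theorem integral_deficit_le (h : IsWeakLimit P κ un xn u x)
    (hn : ∀ n, IsTame ρ c P κ F x₀ (un n) (xn n)) (hF : IsDissipative F b) (hx₀ : 0 ≤ x₀)
    (hM : Tendsto (fun n ↦ objective ρ c (un n) (xn n)) atTop (𝓝 M)) (hρ : 0 < ρ)
    (hc : 0 ≤ c) (hκ : 0 ≤ κ) (hε : 0 < ε) (hε1 : ε ≤ 1) (hT : 0 ≤ T) :
    ∫ t in (0 : ℝ)..T, deficit ρ c P κ (fun t ↦ u t + ε) x t ≤ objectiveBound ρ P κ - M := by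
  have hw : IntervalIntegrable (fun t ↦ exp (-ρ * t) / (u t + ε)) volume 0 T := by
    simpa only [mul_one] using
      h.intervalIntegrable_exp_div_mul hε ρ (intervalIntegrable_const (c := (1 : ℝ)))
  have hterm : ∀ n, (∫ t in (0 : ℝ)..T, deficit ρ c P κ (fun t ↦ u t + ε) (xn n) t) -
      (∫ t in (0 : ℝ)..T, exp (-ρ * t) / (u t + ε) * (un n t - u t)) ≤
        objectiveBound ρ P κ - objective ρ c (un n) (xn n) := fun n ↦ by
    have hdef := h.intervalIntegrable_deficit hε (hn n).continuous ρ c 0 T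
    have hwd := h.intervalIntegrable_exp_div_mul hε ρ
      (((hn n).intervalIntegrable 0 T).sub (h.intervalIntegrable 0 T))
    rw [← intervalIntegral.integral_sub hdef hwd]
    exact (intervalIntegral.integral_mono_on hT (hdef.sub hwd)
      ((hn n).intervalIntegrable_deficit hρ hT) fun t _ ↦
        deficit_add_sub_le_deficit (h.control_mem t).1 ((hn n).pos t) hε).trans
      ((hn n).integral_deficit_le hρ hc hκ hT)
  have hlim := (h.tendsto_integral_deficit hn hF hx₀ hc hκ hε hε1 hT).sub
    (h.tendsto_integral_mul_sub hn hκ hT hw)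
  rw [sub_zero] at hlim
  exact le_of_tendsto_of_tendsto' hlim (hM.const_sub _) hterm

theorem deficit_nonneg (h : IsWeakLimit P κ un xn u x) (hc : 0 ≤ c) (hκ : 0 ≤ κ) (hε : 0 < ε)
    (hε1 : ε ≤ 1) (ht : 0 ≤ t) : 0 ≤ deficit ρ c P κ (fun t ↦ u t + ε) y t :=
  _root_.deficit_nonneg (u := fun t ↦ u t + ε) hc h.bound_nonneg hκ ht (h.add_pos hε t)
    (add_le_add (h.control_mem t).2 hε1)

theorem integrableOn_deficit (h : IsWeakLimit P κ un xn u x)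
    (hn : ∀ n, IsTame ρ c P κ F x₀ (un n) (xn n)) (hF : IsDissipative F b) (hx₀ : 0 ≤ x₀)
    (hM : Tendsto (fun n ↦ objective ρ c (un n) (xn n)) atTop (𝓝 M)) (hρ : 0 < ρ)
    (hc : 0 ≤ c) (hκ : 0 ≤ κ) (hε : 0 < ε) (hε1 : ε ≤ 1) :
    IntegrableOn (deficit ρ c P κ (fun t ↦ u t + ε) x) (Ioi 0) :=
  integrableOn_Ioi_of_integral_le (fun _ ht ↦ h.deficit_nonneg hc hκ hε hε1 ht)
    (h.intervalIntegrable_deficit hε h.continuous ρ c 0)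
    fun _ hT ↦ h.integral_deficit_le hn hF hx₀ hM hρ hc hκ hε hε1 hT

theorem setIntegral_deficit_le (h : IsWeakLimit P κ un xn u x)
    (hn : ∀ n, IsTame ρ c P κ F x₀ (un n) (xn n)) (hF : IsDissipative F b) (hx₀ : 0 ≤ x₀)
    (hM : Tendsto (fun n ↦ objective ρ c (un n) (xn n)) atTop (𝓝 M)) (hρ : 0 < ρ)
    (hc : 0 ≤ c) (hκ : 0 ≤ κ) (hε : 0 < ε) (hε1 : ε ≤ 1) :
    ∫ t in Ioi 0, deficit ρ c P κ (fun t ↦ u t + ε) x t ≤ objectiveBound ρ P κ - M :=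
  integral_Ioi_le_of_integral_le (h.integrableOn_deficit hn hF hx₀ hM hρ hc hκ hε hε1)
    fun _ hT ↦ h.integral_deficit_le hn hF hx₀ hM hρ hc hκ hε hε1 hT

theorem ae_pos (h : IsWeakLimit P κ un xn u x) (hn : ∀ n, IsTame ρ c P κ F x₀ (un n) (xn n))
    (hF : IsDissipative F b) (hx₀ : 0 ≤ x₀)
    (hM : Tendsto (fun n ↦ objective ρ c (un n) (xn n)) atTop (𝓝 M)) (hρ : 0 < ρ) (hc : 0 ≤ c)
    (hκ : 0 ≤ κ) : ∀ᵐ t ∂volume.restrict (Ioi 0), 0 < u t := by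
  have hfinite := ae_not_tendsto_atTop (μ := volume.restrict (Ioi 0))
    (fun n : ℕ ↦ h.measurable_deficit ρ c (1 / (n + 1)))
    (fun n ↦ h.integrableOn_deficit hn hF hx₀ hM hρ hc hκ Nat.one_div_pos_of_nat
      (one_div_succ_le_one n))
    (fun n ↦ ae_restrict_of_forall_mem measurableSet_Ioi fun t ht ↦
      h.deficit_nonneg hc hκ Nat.one_div_pos_of_nat (one_div_succ_le_one n) (le_of_lt ht))
    fun n ↦ h.setIntegral_deficit_le hn hF hx₀ hM hρ hc hκ Nat.one_div_pos_of_nat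
      (one_div_succ_le_one n)
  filter_upwards [hfinite] with t ht
  exact (h.control_mem t).1.lt_of_ne' fun hzero ↦ ht (tendsto_deficit_add_atTop hzero)

theorem objIntegrable_and_le_objective (h : IsWeakLimit P κ un xn u x)
    (hn : ∀ n, IsTame ρ c P κ F x₀ (un n) (xn n)) (hF : IsDissipative F b) (hx₀ : 0 ≤ x₀)
    (hM : Tendsto (fun n ↦ objective ρ c (un n) (xn n)) atTop (𝓝 M)) (hρ : 0 < ρ) (hc : 0 ≤ c)
    (hκ : 0 ≤ κ) : ObjIntegrable ρ c u x ∧ M ≤ objective ρ c u x := by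
  obtain ⟨hint, hle⟩ := integrable_and_integral_le_of_tendsto_ae
    (fun n : ℕ ↦ h.integrableOn_deficit hn hF hx₀ hM hρ hc hκ Nat.one_div_pos_of_nat
      (one_div_succ_le_one n))
    (fun n ↦ ae_restrict_of_forall_mem measurableSet_Ioi fun t ht ↦
      h.deficit_nonneg hc hκ Nat.one_div_pos_of_nat (one_div_succ_le_one n) (le_of_lt ht))
    (fun n ↦ h.setIntegral_deficit_le hn hF hx₀ hM hρ hc hκ Nat.one_div_pos_of_nat
      (one_div_succ_le_one n))
    ((h.ae_pos hn hF hx₀ hM hρ hc hκ).mono fun _ ht ↦ tendsto_deficit_add ht)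
  have hobj : ObjIntegrable ρ c u x := (integrableOn_deficit_iff hρ).1 hint
  rw [integral_deficit hρ hobj, sub_le_sub_iff_left] at hle
  exact ⟨hobj, hle⟩

end IsWeakLimit

end Deficit

section Existence

variable {ρ c K P κ M x₀ : ℝ} {F : ℝ → ℝ} {b : ℝ≥0} {u x : ℝ → ℝ}

theorem IsWeakLimit.admissible {un xn : ℕ → ℝ → ℝ} (h : IsWeakLimit P κ un xn u x)
    (hpos : ∀ᵐ t ∂volume.restrict (Ioi 0), 0 < u t) : Admissible u :=
  ⟨h.measurable, fun T hT ↦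
    (intervalIntegrable_iff_integrableOn_Icc_of_le hT.le).1 (h.intervalIntegrable 0 T),
    by rwa [← Measure.restrict_congr_set Ioi_ae_eq_Ici]⟩

theorem IsWeakLimit.ae_abs_control_le {un xn : ℕ → ℝ → ℝ} (h : IsWeakLimit P κ un xn u x)
    (hκ : 0 ≤ κ) (T : ℝ) :
    ∀ᵐ t ∂volume.restrict (Icc 0 T), |u t| ≤ P * exp (κ * T) := by
  refine ae_restrict_of_forall_mem measurableSet_Icc fun t ht ↦ ?_
  rw [abs_of_nonneg (h.control_mem t).1]
  exact (h.control_mem t).2.trans <| mul_le_mul_of_nonneg_left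
    (exp_le_exp.2 (mul_le_mul_of_nonneg_left ht.2 hκ)) h.bound_nonneg

theorem IsDissipative.abs_log_exp_neg_sub_le (hF : IsDissipative F b) {r t y : ℝ} (ht : 0 ≤ t)
    (hy : y ∈ Icc 0 r) : |log (exp (-t) - F y)| ≤ b * r + t := by
  have hlower : exp (-t) ≤ exp (-t) - F y := le_sub_self_iff _ |>.2 (hF.nonpos hy.1)
  have hupper : exp (-t) - F y ≤ b * r + 1 := by
    have hexp : exp (-t) ≤ 1 := exp_le_one_iff.2 (neg_nonpos.2 ht)
    have hFy := hF.neg_mul_le hy.1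
    have hby : b * y ≤ b * r := mul_le_mul_of_nonneg_left hy.2 b.2
    linarith
  have hpos : 0 < exp (-t) - F y := (exp_pos _).trans_le hlower
  have hbr : 0 ≤ b * r := mul_nonneg b.2 (hy.1.trans hy.2)
  rw [abs_le]
  constructor
  · linarith [(le_log_iff_exp_le hpos).2 hlower]
  · linarith [log_le_sub_one_of_pos hpos]

theorem IsTame.exists_maximizing_seq (h : IsTame ρ c P κ F x₀ u x) (hρ : 0 < ρ) (hc : 0 ≤ c)
    (hκ : 0 ≤ κ) :
    ∃ (un xn : ℕ → ℝ → ℝ) (M : ℝ), (∀ n, IsTame ρ c P κ F x₀ (un n) (xn n)) ∧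
      Tendsto (fun n ↦ objective ρ c (un n) (xn n)) atTop (𝓝 M) ∧
      ∀ v y, IsTame ρ c P κ F x₀ v y → objective ρ c v y ≤ M := by
  let values : Set ℝ := {r | ∃ v y, IsTame ρ c P κ F x₀ v y ∧ objective ρ c v y = r}
  have hbdd : BddAbove values := ⟨objectiveBound ρ P κ, by
    rintro _ ⟨v, y, hvy, rfl⟩
    exact hvy.objective_le hρ hc hκ⟩
  obtain ⟨r, -, hr, hmem⟩ := exists_seq_tendsto_sSup (S := values) ⟨_, u, x, h, rfl⟩ hbdd
  choose un xn htame hval using hmem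
  exact ⟨un, xn, sSup values, htame, by simpa only [hval] using hr,
    fun v y hvy ↦ le_csSup hbdd ⟨v, y, hvy, rfl⟩⟩

/-- The state moves from `x₀` to `x₀ + 1` at speed `e^{-t}`, so `log u` decreases at most
linearly. -/
theorem IsDissipative.exists_objIntegrable (hF : IsDissipative F b) (hx₀ : 0 ≤ x₀) (hρ : 0 < ρ)
    (c : ℝ) : ∃ u x, IsControlPair F x₀ u x ∧ ObjIntegrable ρ c u x := by
  let x : ℝ → ℝ := fun t ↦ x₀ + (1 - exp (-|t|))
  have hx : ∀ t, x t ∈ Icc 0 (x₀ + 1) := fun t ↦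
    ⟨add_nonneg hx₀ (sub_nonneg.2 (exp_le_one_iff.2 (neg_nonpos.2 (abs_nonneg t)))),
      add_le_add_right (sub_le_self 1 (exp_pos _).le) x₀⟩
  have hxc : Continuous x := by fun_prop
  have huc : Continuous fun t ↦ exp (-|t|) - F (x t) := by
    have := hF.lipschitz.continuous
    fun_prop
  have hpair : IsControlPair F x₀ (fun t ↦ exp (-|t|) - F (x t)) x :=
    { measurable := huc.measurable
      pos t := sub_pos.2 ((hF.nonpos (hx t).1).trans_lt (exp_pos _))
      intervalIntegrable := huc.intervalIntegrable
      continuous := hxc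
      eq_add_integral t ht := by
        simp only [add_sub_cancel]
        rw [intervalIntegral.integral_congr (g := fun s ↦ exp (-s)) fun s hs ↦ by
          simp only [abs_of_nonneg (uIcc_of_le ht ▸ hs).1]]
        simp [x, abs_of_nonneg ht] }
  refine ⟨_, x, hpair, (integrableOn_exp_neg_mul_mul_add hρ
    (b * (x₀ + 1) + |c| * (x₀ + 1) ^ 2) 1).mono'
      (hpair.measurable_integrand ρ c).aestronglyMeasurable
      (ae_restrict_of_forall_mem measurableSet_Ioi fun t ht ↦ ?_)⟩
  rw [norm_mul, norm_of_nonneg (exp_pos _).le, norm_eq_abs]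
  gcongr
  calc |log (exp (-|t|) - F (x t)) - c * x t ^ 2|
      ≤ |log (exp (-|t|) - F (x t))| + |c * x t ^ 2| := abs_sub _ _
    _ ≤ b * (x₀ + 1) + |t| + |c| * (x₀ + 1) ^ 2 := by
        rw [abs_mul, abs_of_nonneg (sq_nonneg (x t))]
        exact add_le_add (hF.abs_log_exp_neg_sub_le (abs_nonneg t) (hx t))
          (mul_le_mul_of_nonneg_left (pow_le_pow_left₀ (hx t).1 (hx t).2 2) (abs_nonneg c))
    _ = b * (x₀ + 1) + |c| * (x₀ + 1) ^ 2 + 1 * t := by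
        rw [abs_of_pos ht]
        ring

/-- The control `u` with the value `1` where `u` is not positive or the time is negative. -/
noncomputable def positiveControl (u : ℝ → ℝ) (t : ℝ) : ℝ :=
  open Classical in (Ici 0 ∩ {t | 0 < u t}).piecewise u 1 t

theorem positiveControl_eq {t : ℝ} (ht : 0 ≤ t) (hu : 0 < u t) : positiveControl u t = u t :=
  piecewise_eq_of_mem _ _ _ ⟨ht, hu⟩

theorem positiveControl_pos (u : ℝ → ℝ) (t : ℝ) : 0 < positiveControl u t := by
  unfold positiveControl
  by_cases ht : t ∈ Ici 0 ∩ {t | 0 < u t}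
  · rw [piecewise_eq_of_mem _ _ _ ht]
    exact ht.2
  · rw [piecewise_eq_of_notMem _ _ _ ht]
    exact one_pos

theorem Admissible.ae_positiveControl_eq (hu : Admissible u) :
    ∀ᵐ t ∂volume.restrict (Ici 0), positiveControl u t = u t := by
  filter_upwards [hu.2.2, ae_restrict_mem measurableSet_Ici] with t hpos ht
  exact positiveControl_eq ht hpos

theorem Admissible.measurableSet_pos (hu : Admissible u) :
    MeasurableSet (Ici 0 ∩ {t | 0 < u t}) :=
  measurableSet_Ici.inter (measurableSet_lt measurable_const hu.1)

theorem Admissible.intervalIntegrable_positiveControl (hu : Admissible u) (s t : ℝ) :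
    IntervalIntegrable (positiveControl u) volume s t := by
  classical
  refine intervalIntegrable_iff.2 (Integrable.piecewise hu.measurableSet_pos ?_ ?_)
  · rw [IntegrableOn, Measure.restrict_restrict hu.measurableSet_pos]
    refine (hu.2.1 (max 1 (max s t)) (by positivity)).mono_set fun r hr ↦ ?_
    exact ⟨hr.1.1, hr.2.2.trans (le_max_right _ _)⟩
  · exact Integrable.integrableOn (intervalIntegrable_iff.1 intervalIntegrable_const)

theorem Trajectory.isControlPair (hx : Trajectory F x₀ u x) (hu : Admissible u) :
    IsControlPair F x₀ (positiveControl u) fun t ↦ x (max t 0) where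
  measurable := by
    classical
    exact hu.1.piecewise hu.measurableSet_pos measurable_one
  pos := positiveControl_pos u
  intervalIntegrable := hu.intervalIntegrable_positiveControl
  continuous := hx.1.comp_continuous (by fun_prop) fun t ↦ le_max_right t 0
  eq_add_integral t ht := by
    rw [max_eq_left ht, hx.2 t ht]
    congr 1
    refine intervalIntegral.integral_congr_ae_restrict ?_
    rw [uIoc_of_le ht]
    filter_upwards [ae_restrict_of_ae_restrict_of_subset
      (Ioc_subset_Ioi_self.trans Ioi_subset_Ici_self) hu.ae_positiveControl_eq,
      ae_restrict_mem measurableSet_Ioc] with s hs hmem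
    rw [hs, max_eq_left hmem.1.le]

theorem Admissible.ae_integrand_eq (hu : Admissible u) (ρ c : ℝ) (x : ℝ → ℝ) :
    (fun t ↦ exp (-ρ * t) * (log (u t) - c * x t ^ 2)) =ᵐ[volume.restrict (Ioi 0)]
      fun t ↦ exp (-ρ * t) * (log (positiveControl u t) - c * x (max t 0) ^ 2) := by
  filter_upwards [ae_restrict_of_ae_restrict_of_subset Ioi_subset_Ici_self
    hu.ae_positiveControl_eq, ae_restrict_mem measurableSet_Ioi] with t heq ht
  rw [heq, max_eq_left (le_of_lt ht)]

theorem IsCompetitive.objective_le (h : IsCompetitive ρ c K F x₀ u x) (hF : IsDissipative F b)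
    (hx₀ : 0 ≤ x₀) (hρ : 0 < ρ) (hc : 0 < c)
    (hM : ∀ v y, IsTame ρ c (tameBound ρ c K b) (b + ρ) F x₀ v y → objective ρ c v y ≤ M) :
    objective ρ c u x ≤ M :=
  (h.objective_le_truncated hF hx₀ hρ hc).trans (hM _ _ (h.isTame_truncated hF hx₀ hρ hc))

theorem IsCompetitive.objective_le_of_isControlPair (h : IsCompetitive ρ c K F x₀ u x)
    (hF : IsDissipative F b) (hx₀ : 0 ≤ x₀) (hρ : 0 < ρ) (hc : 0 < c)
    (hM : ∀ v y, IsTame ρ c (tameBound ρ c K b) (b + ρ) F x₀ v y → objective ρ c v y ≤ M)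
    {v y : ℝ → ℝ} (hvy : IsControlPair F x₀ v y) (hobj : ObjIntegrable ρ c v y) :
    objective ρ c v y ≤ M := by
  rcases le_total (-K) (objective ρ c v y) with hK | hK
  · exact IsCompetitive.objective_le ⟨hvy, hobj, hK⟩ hF hx₀ hρ hc hM
  · exact hK.trans (h.neg_le_objective.trans (h.objective_le hF hx₀ hρ hc hM))

theorem Trajectory.objective_le_of_forall_isControlPair (hx : Trajectory F x₀ u x)
    (hu : Admissible u) (hobj : ObjIntegrable ρ c u x)
    (hM : ∀ v y, IsControlPair F x₀ v y → ObjIntegrable ρ c v y → objective ρ c v y ≤ M) :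
    objective ρ c u x ≤ M :=
  (integral_congr_ae (hu.ae_integrand_eq ρ c x)).trans_le <|
    hM _ _ (hx.isControlPair hu) (hobj.congr (hu.ae_integrand_eq ρ c x))

end Existence

theorem shallow_lake_existence_of_optimum_general {ρ c x₀ : ℝ} {F : ℝ → ℝ} {b : ℝ≥0}
    (hρ : 0 < ρ) (hc : 0 < c) (hx₀ : 0 ≤ x₀) (hF : Antitone F) (hFb : LipschitzWith b F)
    (hF0 : F 0 = 0) :
    ∃ ust xst : ℝ → ℝ,
      Admissible ust ∧
      (∀ T : ℝ, 0 < T → ∃ C : ℝ, ∀ᵐ t ∂volume.restrict (Icc 0 T), |ust t| ≤ C) ∧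
      Trajectory F x₀ ust xst ∧
      ObjIntegrable ρ c ust xst ∧
      ∀ u x : ℝ → ℝ, Admissible u → Trajectory F x₀ u x → ObjIntegrable ρ c u x →
        objective ρ c u x ≤ objective ρ c ust xst := by
  have hdiss : IsDissipative F b := ⟨hF, hFb, hF0⟩
  have hκ : 0 ≤ b + ρ := by positivity
  obtain ⟨v, y, hvy, hint⟩ := hdiss.exists_objIntegrable hx₀ hρ c
  have hcomp : IsCompetitive ρ c (-objective ρ c v y) F x₀ v y := ⟨hvy, hint, (neg_neg _).le⟩
  obtain ⟨un, xn, M, htame, hlim, hsup⟩ :=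
    (hcomp.isTame_truncated hdiss hx₀ hρ hc).exists_maximizing_seq hρ hc.le hκ
  obtain ⟨φ, u, x, hφ, hux⟩ := exists_subseq_isWeakLimit hdiss hx₀ htame
  have htame' n := htame (φ n)
  have hlim' := hlim.comp hφ.tendsto_atTop
  have hpos := hux.ae_pos htame' hdiss hx₀ hlim' hρ hc.le hκ
  obtain ⟨hobj, hle⟩ := hux.objIntegrable_and_le_objective htame' hdiss hx₀ hlim' hρ hc.le hκ
  refine ⟨u, x, hux.admissible hpos, fun T _ ↦ ⟨_, hux.ae_abs_control_le hκ T⟩,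
    ⟨hux.continuous.continuousOn, fun t ht ↦ hux.eq_add_integral hdiss hx₀ htame' ht⟩, hobj,
    fun v y hv hy hint ↦ (hy.objective_le_of_forall_isControlPair hv hint ?_).trans hle⟩
  exact fun _ _ ↦ hcomp.objective_le_of_isControlPair hdiss hx₀ hρ hc hsup

/-- The shallow-lake optimal control problem admits a locally bounded optimal
control in `L¹_loc(0,∞)`. -/
theorem shallow_lake_existence_of_optimum
    (ρ c x₀ b₀ l : ℝ) (F : ℝ → ℝ)
    (hρ : 0 < ρ) (hc : 0 < c) (hx₀ : 0 ≤ x₀) (hb₀ : 0 < b₀) (hl : 0 < l)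
    (hF : ContDiff ℝ 1 F) (hF0 : F 0 = 0)
    (hF'le : ∀ y : ℝ, deriv F y ≤ 0)
    (hF'0 : deriv F 0 < 0)
    (hF'ge : ∀ y : ℝ, -b₀ ≤ deriv F y)
    (hFlim : Tendsto (deriv F) atTop (nhds (-l))) :
    ∃ ust xst : ℝ → ℝ,
      Admissible ust ∧
      (∀ T : ℝ, 0 < T → ∃ C : ℝ, ∀ᵐ t ∂(volume.restrict (Set.Icc (0:ℝ) T)), |ust t| ≤ C) ∧
      Trajectory F x₀ ust xst ∧
      ObjIntegrable ρ c ust xst ∧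
      (∀ u x : ℝ → ℝ, Admissible u → Trajectory F x₀ u x → ObjIntegrable ρ c u x →
        objective ρ c u x ≤ objective ρ c ust xst) :=
  have hdiff : Differentiable ℝ F := hF.differentiable one_ne_zero
  shallow_lake_existence_of_optimum_general hρ hc hx₀ (antitone_of_deriv_nonpos hdiff hF'le)
    (lipschitzWith_of_nnnorm_deriv_le (C := ⟨b₀, hb₀.le⟩) hdiff fun y ↦
      abs_le.2 ⟨hF'ge y, (hF'le y).trans hb₀.le⟩) hF0
end

section
/- Let ρ > 0, c > 0, x₀ ≥ 0, b₀ > 0, and let F : ℝ → ℝ be continuously differentiable with F(0) = 0 and −b₀ ≤ F'(y) ≤ 0 for all y ∈ ℝ. Then for every real number r there exists a constant K > 0 (depending only on ρ, c, b₀ and r) such that: for every admissible control u and every trajectory x associated with u for which t ↦ e^{-ρt}(log u(t) − c·x(t)²) is Lebesgue integrable on [0,∞) and B(u,x) ≥ r, the function t ↦ e^{-ρt}u(t) is integrable on [0,∞) and ∫₀^∞ e^{-ρt} u(t) dt ≤ K. -/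
open MeasureTheory Filter

/-! Multiply `x' = f + u` by a weight `w ≥ 0` with `w T = 0` and integrate by parts: since
`w 0 * x 0 ≥ 0`, this gives `∫ w u ≤ -∫ (w' x + w f)`. When `f ≥ -b |x|` and
`(|w'| + b w)² ≤ c w n`, the right-hand side is absorbed by `c ∫ w x²` at the cost of `∫ n`, so
`log u ≤ u` yields `∫ w u ≤ ∫ n - ∫ w (log u - c x²)`. The square in
`w t = (1 - t / T)² e^{-ρ t}` is what makes `n = (2 / T + ρ + b)² / c * e^{-ρ t}` admissible up to
the endpoint `T`, so no a priori control of `e^{-ρ T} x(T)` is needed. Letting `T → ∞` gives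
`∫ e^{-ρ t} u ≤ (ρ + b)² / (c ρ) - B(u, x)`. -/

open scoped Topology

section CutoffIntegrals

theorem one_sub_div_mem_Icc {t T : ℝ} (ht : t ∈ Set.Icc 0 T) :
    1 - t / T ∈ Set.Icc (0 : ℝ) 1 :=
  Set.Icc.one_sub_mem (unitInterval.div_mem ht.1 (ht.1.trans ht.2) ht.2)

theorem tendsto_one_sub_div_pow (t : ℝ) (k : ℕ) :
    Tendsto (fun T : ℝ => (1 - t / T) ^ k) atTop (𝓝 1) := by
  simpa using ((tendsto_id.const_div_atTop t).const_sub 1).pow k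

theorem tendsto_intervalIntegral_one_sub_div_pow_smul {E : Type*} [NormedAddCommGroup E]
    [NormedSpace ℝ E] {g : ℝ → E} (hg : IntegrableOn g (Set.Ioi 0)) (k : ℕ) :
    Tendsto (fun T : ℝ => ∫ t in (0 : ℝ)..T, (1 - t / T) ^ k • g t) atTop
      (𝓝 (∫ t in Set.Ioi (0 : ℝ), g t)) := by
  let cutoff (T : ℝ) : ℝ → E := (Set.Ioc 0 T).indicator fun t => (1 - t / T) ^ k • g t
  have hcutoff : ∀ᶠ T in atTop, ∫ t in Set.Ioi (0 : ℝ), cutoff T t =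
      ∫ t in (0 : ℝ)..T, (1 - t / T) ^ k • g t := by
    filter_upwards [eventually_ge_atTop 0] with T hT
    rw [setIntegral_indicator measurableSet_Ioc,
      Set.inter_eq_self_of_subset_right Set.Ioc_subset_Ioi_self,
      intervalIntegral.integral_of_le hT]
  refine (tendsto_integral_filter_of_dominated_convergence (fun t => ‖g t‖)
    (.of_forall fun T => ?_) (.of_forall fun T => .of_forall fun t => ?_) hg.norm ?_).congr' hcutoff
  · have hweight : Continuous fun t : ℝ => (1 - t / T) ^ k := by fun_prop
    exact (hweight.aestronglyMeasurable.smul hg.aestronglyMeasurable).indicator measurableSet_Ioc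
  · refine (norm_indicator_eq_indicator_norm _ t).trans_le
      (Set.indicator_apply_le' (fun ht => ?_) fun _ => norm_nonneg _)
    obtain ⟨hψ0, hψ1⟩ := one_sub_div_mem_Icc (Set.Ioc_subset_Icc_self ht)
    rw [norm_smul, Real.norm_of_nonneg (pow_nonneg hψ0 k)]
    exact mul_le_of_le_one_left (norm_nonneg _) (pow_le_one₀ hψ0 hψ1)
  · filter_upwards [ae_restrict_mem measurableSet_Ioi] with t ht
    have hlim : Tendsto (fun T : ℝ => (1 - t / T) ^ k • g t) atTop (𝓝 (g t)) := by
      simpa only [one_smul] using (tendsto_one_sub_div_pow t k).smul_const (g t)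
    refine hlim.congr' ?_
    filter_upwards [eventually_ge_atTop t] with T hT
    exact (Set.indicator_of_mem (show t ∈ Set.Ioc 0 T from ⟨ht, hT⟩)
      fun t => (1 - t / T) ^ k • g t).symm

theorem one_sub_div_pow_mul_intervalIntegral_le {g : ℝ → ℝ} {S T : ℝ} (hS : 0 ≤ S) (hST : S ≤ T)
    (hg : IntervalIntegrable g volume 0 T) (hg0 : ∀ᵐ t ∂volume.restrict (Set.Ioi 0), 0 ≤ g t)
    (k : ℕ) :
    (1 - S / T) ^ k * ∫ t in (0 : ℝ)..S, g t ≤ ∫ t in (0 : ℝ)..T, (1 - t / T) ^ k * g t := by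
  have hweight : IntervalIntegrable (fun t => (1 - t / T) ^ k * g t) volume 0 T :=
    hg.continuousOn_mul (by fun_prop)
  have hsub : Set.uIcc 0 S ⊆ Set.uIcc 0 T := Set.uIcc_subset_uIcc_left (by
    rw [Set.uIcc_of_le (hS.trans hST)]; exact ⟨hS, hST⟩)
  have hg0T : ∀ᵐ t ∂volume.restrict (Set.Ioc 0 T), 0 ≤ g t :=
    ae_restrict_of_ae_restrict_of_subset Set.Ioc_subset_Ioi_self hg0
  have hg0S : ∀ᵐ t ∂volume.restrict (Set.Ioc 0 S), 0 ≤ g t :=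
    ae_restrict_of_ae_restrict_of_subset Set.Ioc_subset_Ioi_self hg0
  calc (1 - S / T) ^ k * ∫ t in (0 : ℝ)..S, g t
      = ∫ t in (0 : ℝ)..S, (1 - S / T) ^ k * g t :=
        (intervalIntegral.integral_const_mul _ _).symm
    _ ≤ ∫ t in (0 : ℝ)..S, (1 - t / T) ^ k * g t := by
        refine intervalIntegral.integral_mono_ae_restrict hS ((hg.mono_set hsub).const_mul _)
          (hweight.mono_set hsub) ?_
        rw [← restrict_Ioc_eq_restrict_Icc]
        filter_upwards [hg0S, ae_restrict_mem measurableSet_Ioc] with t hgt ht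
        have hS1 := (one_sub_div_mem_Icc ⟨hS, hST⟩).1
        have hT : 0 ≤ T := hS.trans hST
        have htS : t ≤ S := ht.2
        gcongr
    _ ≤ ∫ t in (0 : ℝ)..T, (1 - t / T) ^ k * g t := by
        refine intervalIntegral.integral_mono_interval le_rfl hS hST ?_ hweight
        filter_upwards [hg0T, ae_restrict_mem measurableSet_Ioc] with t hgt ht
        exact mul_nonneg (pow_nonneg (one_sub_div_mem_Icc (Set.Ioc_subset_Icc_self ht)).1 k) hgt

theorem integrableOn_Ioi_and_integral_le {g : ℝ → ℝ} {a C : ℝ}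
    (hg : ∀ S, a < S → IntervalIntegrable g volume a S)
    (hg0 : ∀ᵐ t ∂volume.restrict (Set.Ioi a), 0 ≤ g t)
    (hle : ∀ S, a < S → ∫ t in a..S, g t ≤ C) :
    IntegrableOn g (Set.Ioi a) ∧ ∫ t in Set.Ioi a, g t ≤ C := by
  have hint : IntegrableOn g (Set.Ioi a) := by
    refine integrableOn_Ioi_of_intervalIntegral_norm_bounded C a (fun S => ?_) tendsto_id ?_
    · rcases le_or_gt S a with hS | hS
      · simp [hS]
      · exact (intervalIntegrable_iff_integrableOn_Ioc_of_le hS.le).1 (hg S hS)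
    · filter_upwards [eventually_gt_atTop a] with S hS
      refine (intervalIntegral.integral_congr_ae_restrict ?_).trans_le (hle S hS)
      rw [id, Set.uIoc_of_le hS.le]
      exact (ae_restrict_of_ae_restrict_of_subset Set.Ioc_subset_Ioi_self hg0).mono
        fun _ => Real.norm_of_nonneg
  refine ⟨hint, le_of_tendsto (intervalIntegral_tendsto_integral_Ioi a hint tendsto_id) ?_⟩
  filter_upwards [eventually_gt_atTop a] with S hS using hle S hS

theorem integrableOn_Ioi_and_integral_le_of_cutoff {g h : ℝ → ℝ} {C : ℝ} (k : ℕ)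
    (hg : ∀ T, 0 < T → IntervalIntegrable g volume 0 T)
    (hg0 : ∀ᵐ t ∂volume.restrict (Set.Ioi 0), 0 ≤ g t)
    (hle : ∀ T, 0 < T → ∫ t in (0 : ℝ)..T, (1 - t / T) ^ k * g t ≤ h T)
    (hh : Tendsto h atTop (𝓝 C)) :
    IntegrableOn g (Set.Ioi 0) ∧ ∫ t in Set.Ioi (0 : ℝ), g t ≤ C := by
  refine integrableOn_Ioi_and_integral_le hg hg0 fun S hS => ?_
  have hlim := (tendsto_one_sub_div_pow S k).mul_const (∫ t in (0 : ℝ)..S, g t)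
  rw [one_mul] at hlim
  refine le_of_tendsto_of_tendsto hlim hh ?_
  filter_upwards [eventually_ge_atTop S] with T hST
  have hT : 0 < T := hS.trans_le hST
  exact (one_sub_div_pow_mul_intervalIntegral_le hS.le hST (hg T hT) hg0 k).trans (hle T hT)

end CutoffIntegrals

section WeightedEstimate

theorem integral_deriv_mul_add_mul_of_eq_primitive {w f x : ℝ → ℝ} {x₀ a b : ℝ}
    (hw : AbsolutelyContinuousOnInterval w a b) (hf : IntervalIntegrable f volume a b)
    (hx : ∀ t ∈ Set.uIcc a b, x t = x₀ + ∫ s in a..t, f s) :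
    ∫ t in a..b, (deriv w t * x t + w t * f t) = w b * x b - w a * x a := by
  let y : ℝ → ℝ := fun t => x₀ + ∫ s in a..t, f s
  have hy : AbsolutelyContinuousOnInterval y a b :=
    contDiff_const.contDiffOn.absolutelyContinuousOnInterval.fun_add
      (hf.absolutelyContinuousOnInterval_intervalIntegral Set.left_mem_uIcc)
  rw [hx a Set.left_mem_uIcc, hx b Set.right_mem_uIcc, ← hw.integral_deriv_mul_eq_sub hy]
  refine intervalIntegral.integral_congr_ae ?_
  filter_upwards [hf.ae_hasDerivAt_integral] with t hderiv ht
  have ht' : t ∈ Set.uIcc a b := Set.uIoc_subset_uIcc ht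
  rw [((hderiv ht' a Set.left_mem_uIcc).const_add x₀).deriv, hx t ht']

theorem weight_mul_le_of_sq_le {w d n u v f x b c : ℝ} (hc : 0 ≤ c) (hw : 0 ≤ w) (hn : 0 ≤ n)
    (hdn : (|d| + b * w) ^ 2 ≤ c * w * n) (hf : -(b * |x|) ≤ f) (hvu : v ≤ u) :
    w * u ≤ 2 * (d * x + w * (f + u)) + n - w * (v - c * x ^ 2) := by
  have hyoung : 2 * ((|d| + b * w) * |x|) ≤ c * w * x ^ 2 + n := by
    refine two_mul_le_add_of_sq_le_mul (by positivity) hn ?_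
    calc ((|d| + b * w) * |x|) ^ 2 = (|d| + b * w) ^ 2 * x ^ 2 := by rw [mul_pow, sq_abs]
      _ ≤ c * w * n * x ^ 2 := by gcongr
      _ = c * w * x ^ 2 * n := by ring
  have hdx : -(|d| * |x|) ≤ d * x := abs_mul d x ▸ neg_abs_le (d * x)
  have hwf : w * -(b * |x|) ≤ w * f := mul_le_mul_of_nonneg_left hf hw
  have hwv : w * v ≤ w * u := mul_le_mul_of_nonneg_left hvu hw
  linarith

theorem integral_weight_mul_le {w n f u v x : ℝ → ℝ} {x₀ a T b c : ℝ} (hc : 0 ≤ c) (haT : a ≤ T)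
    (hw : ContDiff ℝ 1 w) (hw0 : ∀ t ∈ Set.Icc a T, 0 ≤ w t) (hwT : w T = 0)
    (hn : IntervalIntegrable n volume a T) (hn0 : ∀ t ∈ Set.Ioc a T, 0 ≤ n t)
    (hwn : ∀ t ∈ Set.Ioc a T, (|deriv w t| + b * w t) ^ 2 ≤ c * w t * n t)
    (hf : IntervalIntegrable f volume a T) (hu : IntervalIntegrable u volume a T)
    (hx₀ : 0 ≤ x₀) (hx : ∀ t ∈ Set.Icc a T, x t = x₀ + ∫ s in a..t, (f s + u s))
    (hfx : ∀ t ∈ Set.Ioc a T, -(b * |x t|) ≤ f t)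
    (hvu : ∀ᵐ t ∂volume.restrict (Set.Ioc a T), v t ≤ u t)
    (hv : IntervalIntegrable (fun t => w t * (v t - c * x t ^ 2)) volume a T) :
    ∫ t in a..T, w t * u t ≤
      (∫ t in a..T, n t) - ∫ t in a..T, w t * (v t - c * x t ^ 2) := by
  have hfu : IntervalIntegrable (fun t => f t + u t) volume a T := hf.add hu
  rw [← Set.uIcc_of_le haT] at hx
  have hxc : ContinuousOn x (Set.uIcc a T) :=
    ((intervalIntegral.continuousOn_primitive_interval' hfu Set.left_mem_uIcc).const_add
      x₀).congr hx
  have hparts : IntervalIntegrable (fun t => deriv w t * x t + w t * (f t + u t)) volume a T :=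
    ((hw.continuous_deriv_one.continuousOn.mul hxc).intervalIntegrable).add
      (hfu.continuousOn_mul hw.continuous.continuousOn)
  have hboundary : ∫ t in a..T, (deriv w t * x t + w t * (f t + u t)) ≤ 0 := by
    have hxa : x a = x₀ := by simpa using hx a Set.left_mem_uIcc
    rw [integral_deriv_mul_add_mul_of_eq_primitive hw.contDiffOn.absolutelyContinuousOnInterval
      hfu hx, hwT, hxa]
    linarith [mul_nonneg (hw0 a (Set.left_mem_Icc.2 haT)) hx₀]
  have hmono : ∫ t in a..T, w t * u t ≤
      ∫ t in a..T, (2 * (deriv w t * x t + w t * (f t + u t)) + n t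
        - w t * (v t - c * x t ^ 2)) := by
    refine intervalIntegral.integral_mono_ae_restrict haT
      (hu.continuousOn_mul hw.continuous.continuousOn) (((hparts.const_mul 2).add hn).sub hv) ?_
    rw [← restrict_Ioc_eq_restrict_Icc]
    filter_upwards [hvu, ae_restrict_mem measurableSet_Ioc] with t hvut ht
    exact weight_mul_le_of_sq_le hc (hw0 t (Set.Ioc_subset_Icc_self ht)) (hn0 t ht) (hwn t ht)
      (hfx t ht) hvut
  rw [intervalIntegral.integral_sub ((hparts.const_mul 2).add hn) hv,
    intervalIntegral.integral_add (hparts.const_mul 2) hn,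
    intervalIntegral.integral_const_mul] at hmono
  linarith

end WeightedEstimate

section DiscountWeight

/-- The discount factor `e^{-ρ t}` cut off at the horizon `T` by a factor with a double zero
there. It is meant to be used on `[0, T]` only; no truncation beyond `T` is built in. -/
noncomputable def cutoffDiscount (ρ T t : ℝ) : ℝ :=
  (1 - t / T) ^ 2 * Real.exp (-ρ * t)

variable {ρ T t b : ℝ}

theorem contDiff_cutoffDiscount : ContDiff ℝ 1 (cutoffDiscount ρ T) := by
  unfold cutoffDiscount
  fun_prop

theorem cutoffDiscount_nonneg : 0 ≤ cutoffDiscount ρ T t := by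
  unfold cutoffDiscount
  positivity

theorem cutoffDiscount_self (hT : T ≠ 0) : cutoffDiscount ρ T T = 0 := by
  simp [cutoffDiscount, hT]

theorem deriv_cutoffDiscount : deriv (cutoffDiscount ρ T) t =
    -((2 / T + ρ * (1 - t / T)) * ((1 - t / T) * Real.exp (-ρ * t))) := by
  have hcut : HasDerivAt (fun s : ℝ => 1 - s / T) (-(1 / T)) t :=
    ((hasDerivAt_id t).div_const T).const_sub 1
  have hexp : HasDerivAt (fun s : ℝ => Real.exp (-ρ * s)) (Real.exp (-ρ * t) * (-ρ * 1)) t :=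
    ((hasDerivAt_id t).const_mul (-ρ)).exp
  refine ((hcut.fun_pow 2).fun_mul hexp).deriv.trans ?_
  norm_num
  ring

theorem sq_abs_deriv_cutoffDiscount_add_le (hρ : 0 ≤ ρ) (hb : 0 ≤ b) (ht : t ∈ Set.Icc 0 T) :
    (|deriv (cutoffDiscount ρ T) t| + b * cutoffDiscount ρ T t) ^ 2 ≤
      (2 / T + ρ + b) ^ 2 * cutoffDiscount ρ T t * Real.exp (-ρ * t) := by
  obtain ⟨hψ0, hψ1⟩ := one_sub_div_mem_Icc ht
  have hT : 0 ≤ T := ht.1.trans ht.2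
  have hlin : |deriv (cutoffDiscount ρ T) t| + b * cutoffDiscount ρ T t ≤
      (2 / T + ρ + b) * ((1 - t / T) * Real.exp (-ρ * t)) := by
    calc |deriv (cutoffDiscount ρ T) t| + b * cutoffDiscount ρ T t
        = (2 / T + (ρ + b) * (1 - t / T)) * ((1 - t / T) * Real.exp (-ρ * t)) := by
          rw [deriv_cutoffDiscount, abs_neg, abs_of_nonneg (by positivity), cutoffDiscount]
          ring
      _ ≤ (2 / T + (ρ + b) * 1) * ((1 - t / T) * Real.exp (-ρ * t)) := by gcongr
      _ = (2 / T + ρ + b) * ((1 - t / T) * Real.exp (-ρ * t)) := by ring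
  calc (|deriv (cutoffDiscount ρ T) t| + b * cutoffDiscount ρ T t) ^ 2
      ≤ ((2 / T + ρ + b) * ((1 - t / T) * Real.exp (-ρ * t))) ^ 2 := by
        have := mul_nonneg hb (cutoffDiscount_nonneg (ρ := ρ) (T := T) (t := t))
        gcongr
    _ = (2 / T + ρ + b) ^ 2 * cutoffDiscount ρ T t * Real.exp (-ρ * t) := by
        rw [cutoffDiscount]; ring

end DiscountWeight

section DiscountedBound

variable {ρ b c x₀ : ℝ} {f u v x : ℝ → ℝ}

theorem integral_one_sub_div_sq_mul_discounted_le {T : ℝ} (hρ : 0 ≤ ρ) (hc : 0 < c) (hb : 0 ≤ b)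
    (hT : 0 < T) (hf : IntervalIntegrable f volume 0 T) (hu : IntervalIntegrable u volume 0 T)
    (hx₀ : 0 ≤ x₀) (hx : ∀ t ∈ Set.Icc 0 T, x t = x₀ + ∫ s in (0 : ℝ)..t, (f s + u s))
    (hfx : ∀ t ∈ Set.Ioc 0 T, -(b * |x t|) ≤ f t)
    (hvu : ∀ᵐ t ∂volume.restrict (Set.Ioc 0 T), v t ≤ u t)
    (hv : IntervalIntegrable (fun t => Real.exp (-ρ * t) * (v t - c * x t ^ 2)) volume 0 T) :
    ∫ t in (0 : ℝ)..T, (1 - t / T) ^ 2 * (Real.exp (-ρ * t) * u t) ≤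
      (2 / T + ρ + b) ^ 2 / c * (∫ t in (0 : ℝ)..T, Real.exp (-ρ * t)) -
        ∫ t in (0 : ℝ)..T, (1 - t / T) ^ 2 * (Real.exp (-ρ * t) * (v t - c * x t ^ 2)) := by
  have hv' : IntervalIntegrable (fun t => cutoffDiscount ρ T t * (v t - c * x t ^ 2))
      volume 0 T := by
    simpa only [cutoffDiscount, mul_assoc] using
      hv.continuousOn_mul (g := fun t => (1 - t / T) ^ 2) (by fun_prop)
  have hle := integral_weight_mul_le (n := fun t => (2 / T + ρ + b) ^ 2 / c * Real.exp (-ρ * t))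
    (b := b) hc.le hT.le contDiff_cutoffDiscount (fun _ _ => cutoffDiscount_nonneg)
    (cutoffDiscount_self hT.ne') (Continuous.intervalIntegrable (by fun_prop) _ _)
    (fun t _ => by positivity) (fun t ht => ?_) hf hu hx₀ hx hfx hvu hv'
  · simpa only [cutoffDiscount, mul_assoc, intervalIntegral.integral_const_mul] using hle
  · refine (sq_abs_deriv_cutoffDiscount_add_le hρ hb (Set.Ioc_subset_Icc_self ht)).trans_eq ?_
    field_simp

theorem integrableOn_discounted_and_integral_le (hρ : 0 < ρ) (hc : 0 < c) (hb : 0 ≤ b)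
    (hf : ∀ T, 0 < T → IntervalIntegrable f volume 0 T)
    (hu : ∀ T, 0 < T → IntervalIntegrable u volume 0 T)
    (hx₀ : 0 ≤ x₀) (hx : ∀ t, 0 ≤ t → x t = x₀ + ∫ s in (0 : ℝ)..t, (f s + u s))
    (hfx : ∀ t, 0 < t → -(b * |x t|) ≤ f t)
    (hu0 : ∀ᵐ t ∂volume.restrict (Set.Ioi 0), 0 ≤ u t)
    (hvu : ∀ᵐ t ∂volume.restrict (Set.Ioi 0), v t ≤ u t)
    (hv : IntegrableOn (fun t => Real.exp (-ρ * t) * (v t - c * x t ^ 2)) (Set.Ioi 0)) :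
    IntegrableOn (fun t => Real.exp (-ρ * t) * u t) (Set.Ioi 0) ∧
      ∫ t in Set.Ioi (0 : ℝ), Real.exp (-ρ * t) * u t ≤
        (ρ + b) ^ 2 / (c * ρ) -
          ∫ t in Set.Ioi (0 : ℝ), Real.exp (-ρ * t) * (v t - c * x t ^ 2) := by
  have hdiscount : Tendsto (fun T => ∫ t in (0 : ℝ)..T, Real.exp (-ρ * t)) atTop (𝓝 (1 / ρ)) := by
    have hval : ∫ t in Set.Ioi (0 : ℝ), Real.exp (-ρ * t) = 1 / ρ := by
      rw [integral_exp_mul_Ioi (neg_lt_zero.2 hρ), mul_zero, Real.exp_zero, neg_div_neg_eq]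
    exact hval ▸ intervalIntegral_tendsto_integral_Ioi 0 (exp_neg_integrableOn_Ioi 0 hρ) tendsto_id
  have hconst : Tendsto (fun T => (2 / T + ρ + b) ^ 2 / c) atTop (𝓝 ((ρ + b) ^ 2 / c)) := by
    simpa using ((((tendsto_id.const_div_atTop (2 : ℝ)).add_const ρ).add_const b).pow 2).div_const c
  have hlim := (hconst.mul hdiscount).sub (tendsto_intervalIntegral_one_sub_div_pow_smul hv 2)
  rw [div_mul_div_comm, mul_one] at hlim
  refine integrableOn_Ioi_and_integral_le_of_cutoff 2
    (fun T hT => (hu T hT).continuousOn_mul (by fun_prop)) ?_ (fun T hT => ?_) hlim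
  · filter_upwards [hu0] with t ht using mul_nonneg (Real.exp_pos _).le ht
  · exact integral_one_sub_div_sq_mul_discounted_le hρ.le hc hb hT (hf T hT) (hu T hT) hx₀
      (fun t ht => hx t ht.1) (fun t ht => hfx t ht.1)
      (ae_restrict_of_ae_restrict_of_subset Set.Ioc_subset_Ioi_self hvu)
      ((intervalIntegrable_iff_integrableOn_Ioc_of_le hT.le).2
        (hv.mono_set Set.Ioc_subset_Ioi_self))

end DiscountedBound

theorem abs_le_mul_abs_of_abs_deriv_le {F : ℝ → ℝ} {b : ℝ} (hF : Differentiable ℝ F)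
    (hF0 : F 0 = 0) (hF' : ∀ y, |deriv F y| ≤ b) (y : ℝ) : |F y| ≤ b * |y| := by
  simpa [hF0] using convex_univ.norm_image_sub_le_of_norm_deriv_le (fun z _ => hF z)
    (fun z _ => hF' z) (Set.mem_univ 0) (Set.mem_univ y)

theorem discounted_control_uniform_bound_general {ρ c b₀ x₀ : ℝ} {F u x : ℝ → ℝ} (hρ : 0 < ρ)
    (hc : 0 < c) (hb₀ : 0 ≤ b₀) (hx₀ : 0 ≤ x₀) (hF : Continuous F)
    (hFb : ∀ y, -(b₀ * |y|) ≤ F y) (hu : Admissible u) (hx : Trajectory F x₀ u x)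
    (hobj : ObjIntegrable ρ c u x) :
    IntegrableOn (fun t => Real.exp (-ρ * t) * u t) (Set.Ioi (0 : ℝ)) ∧
      ∫ t in Set.Ioi (0 : ℝ), Real.exp (-ρ * t) * u t ≤
        (ρ + b₀) ^ 2 / (c * ρ) - objective ρ c u x := by
  obtain ⟨-, huint, hupos⟩ := hu
  obtain ⟨hxcont, hxeq⟩ := hx
  have hu0 : ∀ᵐ t ∂volume.restrict (Set.Ioi 0), 0 ≤ u t :=
    (ae_restrict_of_ae_restrict_of_subset Set.Ioi_subset_Ici_self hupos).mono fun _ => le_of_lt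
  refine integrableOn_discounted_and_integral_le (f := fun t => F (x t)) hρ hc hb₀
    (fun T hT => ?_) (fun T hT => ?_) hx₀ hxeq (fun t _ => hFb (x t)) hu0
    (hu0.mono fun _ => Real.log_le_self) hobj
  · refine (hF.comp_continuousOn (hxcont.mono ?_)).intervalIntegrable
    rw [Set.uIcc_of_le hT.le]
    exact Set.Icc_subset_Ici_self
  · exact (intervalIntegrable_iff_integrableOn_Icc_of_le hT.le).2 (huint T hT)

/-- Uniform bound on the discounted integral of controls whose objective value is
at least `r`; the constant `K` depends only on `ρ`, `c`, `b₀` and `r`. -/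
theorem discounted_control_uniform_bound
    (ρ c b₀ : ℝ) (hρ : 0 < ρ) (hc : 0 < c) (hb₀ : 0 < b₀) (r : ℝ) :
    ∃ K : ℝ, 0 < K ∧
      ∀ (x₀ : ℝ) (F : ℝ → ℝ) (u x : ℝ → ℝ),
        0 ≤ x₀ → ContDiff ℝ 1 F → F 0 = 0 →
        (∀ y : ℝ, -b₀ ≤ deriv F y ∧ deriv F y ≤ 0) →
        Admissible u → Trajectory F x₀ u x → ObjIntegrable ρ c u x →
        r ≤ objective ρ c u x →
        IntegrableOn (fun t => Real.exp (-ρ * t) * u t) (Set.Ioi (0:ℝ)) ∧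
          (∫ t in Set.Ioi (0:ℝ), Real.exp (-ρ * t) * u t) ≤ K := by
  refine ⟨(ρ + b₀) ^ 2 / (c * ρ) + |r|, by positivity, ?_⟩
  intro x₀ F u x hx₀ hF hF0 hF' hu hx hobj hr
  have hFb (y : ℝ) : -(b₀ * |y|) ≤ F y :=
    neg_le_of_abs_le (abs_le_mul_abs_of_abs_deriv_le (hF.differentiable one_ne_zero) hF0
      (fun z => abs_le.2 ⟨(hF' z).1, (hF' z).2.trans hb₀.le⟩) y)
  obtain ⟨hint, hle⟩ :=
    discounted_control_uniform_bound_general hρ hc hb₀.le hx₀ hF.continuous hFb hu hx hobj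
  exact ⟨hint, by linarith [neg_abs_le r]⟩
end
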